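/- arXiv:1604.07200 — 9 statements merged into one kernel-verified Lean document; each statement's English description precedes it below -/
import Mathlib

section
/- Let F be a finite field and d ≥ 1. Then the bipartite graph P_d has projective dimension exactly d over F: assigning to each vertex of P_d (which is a subspace of F^d) the subspace itself is a projective realization of P_d of dimension d over F, and every projective realization of P_d over F has dimension at least d. -/
/-- A projective realization of a bipartite graph with vertex sets `U`, `V` and
edge relation `E` over a field `F`, of dimension `D`: subspaces of `F^D` are
assigned to the vertices so that an edge is present iff the corresponding
subspaces intersect nontrivially. -/
def IsProjRealization (F : Type) [Field F] {U V : Type} (E : U → V → Prop) (D : ℕ)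
    (φU : U → Submodule F (Fin D → F)) (φV : V → Submodule F (Fin D → F)) : Prop :=
  ∀ u v, E u v ↔ φU u ⊓ φV v ≠ ⊥

/-- The edge relation of the bipartite graph `P_d`: both vertex sets are the set of
all `F`-linear subspaces of `F^d`, with an edge between `I` and `J` iff `I ∩ J ≠ {0}`. -/
def PdEdge (F : Type) [Field F] (d : ℕ) (I J : Submodule F (Fin d → F)) : Prop :=
  I ⊓ J ≠ ⊥

/-!
Distinct subspaces are told apart by the lines they meet, so no two vertices of `P_d` have the same
neighbourhood, and a realization must send distinct vertices to distinct subspaces. Over a finite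
field, counting subspaces then forces the ambient dimension not to drop.
-/

theorem le_of_forall_disjoint {α : Type*} [SemilatticeInf α] [OrderBot α] [IsAtomistic α] {a b : α}
    (h : ∀ c, Disjoint b c → Disjoint a c) : a ≤ b := by
  refine le_iff_atom_le_imp.2 fun c hc hca => ?_
  by_contra hcb
  have hbc : Disjoint b c := (hc.not_le_iff_disjoint.1 hcb).symm
  exact hc.not_disjoint_iff_le.2 hca (h c hbc).symm

theorem eq_of_forall_disjoint_iff {α : Type*} [SemilatticeInf α] [OrderBot α] [IsAtomistic α]
    {a b : α} (h : ∀ c, Disjoint a c ↔ Disjoint b c) : a = b :=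
  le_antisymm (le_of_forall_disjoint fun c => (h c).2) (le_of_forall_disjoint fun c => (h c).1)

theorem pdEdge_iff_not_disjoint {F : Type} [Field F] {d : ℕ} {I J : Submodule F (Fin d → F)} :
    PdEdge F d I J ↔ ¬ Disjoint I J :=
  disjoint_iff.not.symm

theorem pdEdge_injective (F : Type) [Field F] (d : ℕ) : Function.Injective (PdEdge F d) := by
  intro I I' h
  refine eq_of_forall_disjoint_iff fun J => not_iff_not.1 ?_
  rw [← pdEdge_iff_not_disjoint, ← pdEdge_iff_not_disjoint, h]

theorem IsProjRealization.injective_left {F : Type} [Field F] {U V : Type} {E : U → V → Prop}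
    {D : ℕ} {φU : U → Submodule F (Fin D → F)} {φV : V → Submodule F (Fin D → F)}
    (h : IsProjRealization F E D φU φV) (hE : Function.Injective E) : Function.Injective φU := by
  intro u u' huu'
  refine hE (funext fun v => propext ?_)
  rw [h u v, h u' v, huu']

theorem finrank_le_of_injective_submodule {K V W : Type*} [DivisionRing K]
    [AddCommGroup V] [Module K V] [Finite V] [AddCommGroup W] [Module K W] [Module.Finite K W]
    {φ : Submodule K V → Submodule K W} (hφ : Function.Injective φ) :
    Module.finrank K V ≤ Module.finrank K W := by
  by_contra! hlt
  obtain ⟨f, hf⟩ := (finrank_le_iff_exists_linearMap).1 hlt.le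
  -- `I ↦ f (φ I)` is an injective self-map of a finite set, so it attains `⊤`.
  have hinj : Function.Injective fun I => (φ I).map f :=
    (Submodule.map_injective_of_injective hf).comp hφ
  obtain ⟨I, hI : (φ I).map f = ⊤⟩ := Finite.surjective_of_injective hinj ⊤
  have hrange : f.range = ⊤ := top_le_iff.1 (hI ▸ LinearMap.map_le_range)
  exact hlt.not_ge (LinearMap.finrank_le_finrank_of_surjective (LinearMap.range_eq_top.1 hrange))

/-- The bipartite graph `P_d` has projective dimension exactly `d` over a finite
field `F`: the identity assignment is a realization of dimension `d`, and every
realization has dimension at least `d`. -/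
theorem stmt_0 (F : Type) [Field F] [Fintype F] (d : ℕ) (hd : 1 ≤ d) :
    IsProjRealization F (PdEdge F d) d id id ∧
      ∀ (D : ℕ) (φU φV : Submodule F (Fin d → F) → Submodule F (Fin D → F)),
        IsProjRealization F (PdEdge F d) D φU φV → d ≤ D := by
  refine ⟨fun _ _ => Iff.rfl, fun D φU φV h => ?_⟩
  have hφU : Function.Injective φU := h.injective_left (pdEdge_injective F d)
  simpa only [Module.finrank_fin_fun] using finrank_le_of_injective_submodule hφU
end

section
/- Let F be a finite field with q elements and let d ≥ 1. Let M be the real matrix whose rows and columns are both indexed by the set of all F-linear subspaces of F^d, with M(I,J) = 1 if I ∩ J ≠ {0} and M(I,J) = 0 otherwise. Then the rank of M over ℝ is at least N_{⌊d/2⌋} − 1, where N_k denotes the number of k-dimensional F-linear subspaces of F^d; consequently rank_ℝ(M) ≥ q^{⌊d/2⌋·⌈d/2⌉} − 1. -/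
open scoped Classical

noncomputable instance (F : Type) [Field F] [Fintype F] (d : ℕ) :
    Fintype (Submodule F (Fin d → F)) :=
  Fintype.ofFinite _

/-!
For a finite lattice `α`, let `D` be the matrix with `D x y = 1` if `x ⊓ y = ⊥` and `0` otherwise.
Since `∑ w ≤ x ⊓ y, μ(⊥, w)` is `1` if `x ⊓ y = ⊥` and `0` otherwise, `D = Zᵀ diag(μ(⊥, ·)) Z`
where `Z` is the zeta matrix, so `D` is invertible as soon as `μ(⊥, ·)` vanishes nowhere. In a
complemented modular lattice, such as that of the subspaces of a vector space, `μ(⊥, ·)` even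
alternates in sign along covers, by Weisner's theorem. The matrix of nontrivial intersections
differs from `-D` by the all-ones matrix, which has rank one, so its rank is at least `card α - 1`.
-/

section Moebius

open Finset IncidenceAlgebra

variable {𝕜 α : Type*} [Lattice α]

-- Weisner's theorem: grouping the `x ≤ z` by the value of `x ⊔ a` shows that these sums, taken over
-- all `y ≤ z`, add up to zero, so each of them vanishes by Möbius inversion.
theorem sum_mu_bot_of_sup_eq [Ring 𝕜] [OrderBot α] [LocallyFiniteOrder α] {a : α} (ha : a ≠ ⊥)
    (y : α) : ∑ x ∈ Iic y with x ⊔ a = y, mu 𝕜 ⊥ x = 0 := by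
  have sum_Iic (z : α) : (0 : 𝕜) = ∑ w ∈ Iic z, ∑ x ∈ Iic w with x ⊔ a = w, mu 𝕜 ⊥ x := by
    by_cases haz : a ≤ z
    · have fiber_eq : ∀ w ∈ Iic z, {x ∈ Iic w | x ⊔ a = w} = {x ∈ Iic z | x ⊔ a = w} := by
        intro w hw
        ext x
        simp only [mem_filter, mem_Iic, and_congr_left_iff] at hw ⊢
        rintro rfl
        exact iff_of_true le_sup_left (le_sup_left.trans hw)
      have maps_to : ∀ x ∈ Iic z, x ⊔ a ∈ Iic z := fun x hx ↦
        mem_Iic.2 (sup_le (mem_Iic.1 hx) haz)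
      have bot_ne : ⊥ ≠ z := fun h ↦ ha (le_bot_iff.1 (h ▸ haz))
      rw [sum_congr rfl fun w hw ↦ by rw [fiber_eq w hw], sum_fiberwise_of_maps_to maps_to,
        ← Icc_bot, sum_Icc_mu_right, if_neg bot_ne]
    · refine (sum_eq_zero fun w hw ↦ sum_eq_zero fun x hx ↦ absurd ?_ haz).symm
      exact le_sup_right.trans ((mem_filter.1 hx).2.trans_le (mem_Iic.1 hw))
  simpa using moebius_inversion_bot _ (fun _ ↦ 0) sum_Iic y

theorem covBy_of_sup_atom_eq [OrderBot α] [IsUpperModularLattice α] {a x y : α} (ha : IsAtom a)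
    (hxy : x ≠ y) (h : x ⊔ a = y) : x ⋖ y := by
  have hax : ¬a ≤ x := fun hax ↦ hxy (by rw [← h, sup_eq_left.2 hax])
  have inf_eq : a ⊓ x = ⊥ := (ha.not_le_iff_disjoint.1 hax).eq_bot
  rw [← h, sup_comm]
  exact covBy_sup_of_inf_covBy_left (inf_eq ▸ ha.bot_covBy)

theorem exists_ne_and_sup_eq [BoundedOrder α] [IsModularLattice α] [ComplementedLattice α] {a y : α}
    (ha : a ≠ ⊥) (hay : a ≤ y) : ∃ x, x ≠ y ∧ x ⊔ a = y := by
  obtain ⟨x, hdisj, hsup⟩ := IsModularLattice.exists_disjoint_and_sup_eq hay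
  refine ⟨x, ?_, sup_comm a x ▸ hsup⟩
  rintro rfl
  exact ha (hdisj.eq_bot_of_le hay)

variable [Field 𝕜] [LinearOrder 𝕜] [IsStrictOrderedRing 𝕜] [BoundedOrder α]
  [LocallyFiniteOrder α] [IsModularLattice α] [ComplementedLattice α]

theorem mu_bot_mul_mu_bot_neg_of_covBy {x y : α} (hxy : x ⋖ y) :
    mu 𝕜 ⊥ x * mu 𝕜 ⊥ y < 0 := by
  have : Finite α := by
    simpa only [Set.Icc_bot_top, Set.finite_univ_iff] using Set.finite_Icc (⊥ : α) ⊤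
  induction y using WellFoundedLT.induction generalizing x with
  | ind y ih =>
    have same_sign : ∀ z, z ⋖ y → 0 < mu 𝕜 ⊥ x * mu 𝕜 ⊥ z := by
      intro z hzy
      rcases eq_or_ne x z with rfl | hxz
      · rcases eq_or_ne x ⊥ with rfl | hx
        · simp
        · obtain ⟨w, -, hwx⟩ := exists_le_covBy_of_lt (bot_lt_iff_ne_bot.2 hx)
          exact mul_self_pos.2 (right_ne_zero_of_mul (ih x hxy.lt hwx).ne)
      · have hsup : x ⊔ z = y := hxy.wcovBy.sup_eq hzy.wcovBy hxz
        have hx := ih x hxy.lt (inf_covBy_of_covBy_sup_right (hsup.symm ▸ hzy))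
        have hz := ih z hzy.lt (inf_covBy_of_covBy_sup_left (hsup.symm ▸ hxy))
        have hmul := mul_pos_of_neg_of_neg hx hz
        rw [mul_mul_mul_comm] at hmul
        exact pos_of_mul_pos_right hmul (mul_self_nonneg _)
    obtain ⟨a, hbot, hay⟩ := exists_covBy_le_of_lt (bot_le.trans_lt hxy.lt)
    have hy : y ∈ {z ∈ Iic y | z ⊔ a = y} := by simpa using hay
    have weisner := sum_mu_bot_of_sup_eq (𝕜 := 𝕜) hbot.ne' y
    rw [← add_sum_erase _ _ hy] at weisner
    have sum_same_sign_pos : 0 < ∑ z ∈ {z ∈ Iic y | z ⊔ a = y}.erase y, mu 𝕜 ⊥ x * mu 𝕜 ⊥ z := by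
      refine sum_pos (fun z hz ↦ same_sign z ?_) ?_
      · obtain ⟨hzy, hz⟩ := mem_erase.1 hz
        exact covBy_of_sup_atom_eq hbot.is_atom hzy (mem_filter.1 hz).2
      · obtain ⟨z, hzy, hz⟩ := exists_ne_and_sup_eq hbot.ne' hay
        exact ⟨z, by simp [hzy, hz, le_sup_left.trans_eq hz]⟩
    rw [← mul_sum] at sum_same_sign_pos
    rwa [eq_neg_of_add_eq_zero_left weisner, mul_neg, neg_lt_zero]

theorem mu_bot_ne_zero (x : α) : mu 𝕜 ⊥ x ≠ 0 := by
  rcases eq_or_ne x ⊥ with rfl | hx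
  · simp
  · obtain ⟨w, -, hwx⟩ := exists_le_covBy_of_lt (bot_lt_iff_ne_bot.2 hx)
    exact right_ne_zero_of_mul (mu_bot_mul_mu_bot_neg_of_covBy hwx).ne

end Moebius

section Matrices

open IncidenceAlgebra Matrix

theorem matrix_rank_sub_le {m n R : Type*} [Finite m] [Fintype n] [Field R] (A B : Matrix m n R) :
    (A - B).rank ≤ A.rank + B.rank := by
  have range_le : LinearMap.range (A - B).mulVecLin ≤
      LinearMap.range A.mulVecLin ⊔ LinearMap.range B.mulVecLin := by
    rintro _ ⟨v, rfl⟩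
    rw [mulVecLin_apply, sub_mulVec]
    exact Submodule.sub_mem_sup ⟨v, rfl⟩ ⟨v, rfl⟩
  exact (Submodule.finrank_mono range_le).trans
    (Submodule.finrank_add_le_finrank_add_finrank _ _)

/-- The 0-1 matrix of the disjointness relation on a poset with least element. -/
noncomputable def disjointnessMatrix (R α : Type*) [Zero R] [One R] [PartialOrder α] [OrderBot α] :
    Matrix α α R :=
  of fun x y ↦ if Disjoint x y then 1 else 0

/-- An element of the incidence algebra of `α`, seen as a matrix indexed by `α`. -/
def incidenceAlgebraMatrix {R α : Type*} [Zero R] [LE α] (f : IncidenceAlgebra R α) :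
    Matrix α α R :=
  of f

variable {R α : Type*} [Fintype α]

theorem incidenceAlgebraMatrix_mul [NonUnitalNonAssocSemiring R] [Preorder α]
    [LocallyFiniteOrder α] (f g : IncidenceAlgebra R α) :
    incidenceAlgebraMatrix (f * g) = incidenceAlgebraMatrix f * incidenceAlgebraMatrix g := by
  ext x y
  refine Finset.sum_subset (Finset.subset_univ _) fun z _ hz ↦ ?_
  rw [Finset.mem_Icc, not_and_or] at hz
  rcases hz with hxz | hzy
  · exact mul_eq_zero_of_left (apply_eq_zero_of_not_le hxz f) _
  · exact mul_eq_zero_of_right _ (apply_eq_zero_of_not_le hzy g)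

theorem isUnit_incidenceAlgebraMatrix_zeta [CommRing R] [PartialOrder α] :
    IsUnit (incidenceAlgebraMatrix (zeta R : IncidenceAlgebra R α)) := by
  let := Fintype.toLocallyFiniteOrder (α := α)
  refine IsUnit.of_mul_eq_one_right (incidenceAlgebraMatrix (mu R)) ?_
  rw [← incidenceAlgebraMatrix_mul, mu_mul_zeta]
  rfl

theorem disjointnessMatrix_eq_mul [Ring R] [SemilatticeInf α] [OrderBot α]
    [LocallyFiniteOrder α] :
    disjointnessMatrix R α = (incidenceAlgebraMatrix (zeta R))ᵀ * diagonal (mu R ⊥) *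
      incidenceAlgebraMatrix (zeta R) := by
  ext x y
  calc disjointnessMatrix R α x y
      = ∑ w ∈ Finset.Icc ⊥ (x ⊓ y), mu R ⊥ w := by
        rw [sum_Icc_mu_right]
        simp [disjointnessMatrix, disjoint_iff, eq_comm]
    _ = ∑ w, if w ≤ x ⊓ y then mu R ⊥ w else 0 := by
        rw [← Finset.sum_filter]
        exact Finset.sum_congr (by ext; simp) fun _ _ ↦ rfl
    _ = _ := by
        rw [Matrix.mul_apply]
        simp [incidenceAlgebraMatrix, mul_diagonal, ← ite_and, and_comm]

theorem isUnit_disjointnessMatrix [CommRing R] [SemilatticeInf α] [OrderBot α]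
    [LocallyFiniteOrder α] (h : ∀ x : α, IsUnit (mu R ⊥ x)) :
    IsUnit (disjointnessMatrix R α) := by
  rw [disjointnessMatrix_eq_mul]
  have isUnit_zeta := isUnit_incidenceAlgebraMatrix_zeta (R := R) (α := α)
  have isUnit_diagonal_mu : IsUnit (diagonal (mu R (⊥ : α))) :=
    isUnit_diagonal.2 (Pi.isUnit_iff.2 h)
  exact (((isUnit_transpose _).2 isUnit_zeta).mul isUnit_diagonal_mu).mul isUnit_zeta

theorem card_le_rank_add_one_of_inf_ne_bot [Field R] [LinearOrder R] [IsStrictOrderedRing R]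
    [Lattice α] [BoundedOrder α] [IsModularLattice α] [ComplementedLattice α] (M : Matrix α α R)
    (hM : ∀ x y, M x y = if x ⊓ y ≠ ⊥ then 1 else 0) : Fintype.card α ≤ M.rank + 1 := by
  let := Fintype.toLocallyFiniteOrder (α := α)
  have disjointnessMatrix_eq : disjointnessMatrix R α = vecMulVec 1 1 - M := by
    ext x y
    by_cases h : x ⊓ y = ⊥ <;> simp [disjointnessMatrix, vecMulVec, disjoint_iff, hM, h]
  calc Fintype.card α = (disjointnessMatrix R α).rank :=
        (rank_of_isUnit _ (isUnit_disjointnessMatrix fun x ↦ (mu_bot_ne_zero x).isUnit)).symm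
    _ ≤ (vecMulVec (1 : α → R) (1 : α → R)).rank + M.rank :=
        disjointnessMatrix_eq ▸ matrix_rank_sub_le _ _
    _ ≤ M.rank + 1 := by
        rw [add_comm]
        gcongr
        exact rank_vecMulVec_le _ _

end Matrices

section Counting

open Module

variable {F V W : Type*}

theorem finrank_linearMap_graph [Semiring F] [AddCommMonoid V] [AddCommMonoid W] [Module F V]
    [Module F W] (f : V →ₗ[F] W) :
    finrank F f.graph = finrank F V := by
  rw [LinearMap.graph_eq_range_prod]
  exact LinearMap.finrank_range_of_inj fun _ _ h ↦ congrArg Prod.fst h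

theorem linearMap_graph_injective [Semiring F] [AddCommMonoid V] [AddCommMonoid W] [Module F V]
    [Module F W] :
    Function.Injective (LinearMap.graph : (V →ₗ[F] W) → Submodule F (V × W)) := by
  intro f g h
  ext x
  have hx : (x, f x) ∈ g.graph := h ▸ (LinearMap.mem_graph_iff f _).2 rfl
  exact (LinearMap.mem_graph_iff g _).1 hx

-- Once `V` is split as `F ^ k × F ^ l`, the graphs of linear maps `F ^ k → F ^ l` are distinct
-- `k`-dimensional subspaces.
theorem pow_mul_le_natCard_finrank_eq [Field F] [Finite F] [AddCommGroup V] [Module F V]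
    [FiniteDimensional F V] {k l : ℕ} (h : k + l = finrank F V) :
    Nat.card F ^ (k * l) ≤ Nat.card {S : Submodule F V // finrank F S = k} := by
  have : Finite V := Module.finite_of_finite F
  let e : ((Fin k → F) × (Fin l → F)) ≃ₗ[F] V := LinearEquiv.ofFinrankEq _ _ (by simp [h])
  let graphSubspace (f : (Fin k → F) →ₗ[F] (Fin l → F)) :
      {S : Submodule F V // finrank F S = k} :=
    ⟨f.graph.map e.toLinearMap, by rw [e.finrank_map_eq, finrank_linearMap_graph, finrank_fin_fun]⟩
  have graphSubspace_injective : Function.Injective graphSubspace := fun f g hfg ↦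
    linearMap_graph_injective
      (Submodule.map_injective_of_injective e.injective (Subtype.ext_iff.1 hfg))
  calc Nat.card F ^ (k * l) = Nat.card ((Fin k → F) →ₗ[F] (Fin l → F)) := by
        rw [natCard_eq_pow_finrank (K := F) (V := (Fin k → F) →ₗ[F] (Fin l → F)),
          finrank_linearMap, finrank_fin_fun, finrank_fin_fun]
    _ ≤ _ := Nat.card_le_card_of_injective graphSubspace graphSubspace_injective

end Counting

theorem stmt_3_general {𝕜 F V : Type*} [Field 𝕜] [LinearOrder 𝕜] [IsStrictOrderedRing 𝕜] [Field F]
    [Finite F] [AddCommGroup V] [Module F V] [Fintype (Submodule F V)]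
    (M : Matrix (Submodule F V) (Submodule F V) 𝕜)
    (hM : ∀ I J, M I J = if I ⊓ J ≠ ⊥ then 1 else 0)
    {k l : ℕ} (hkl : k + l = Module.finrank F V) :
    Nat.card F ^ (k * l) ≤ Nat.card {S : Submodule F V // Module.finrank F S = k} ∧
      Nat.card {S : Submodule F V // Module.finrank F S = k} ≤ M.rank + 1 := by
  have : IsNoetherian F V := isNoetherian_iff'.2 inferInstance
  refine ⟨pow_mul_le_natCard_finrank_eq hkl, ?_⟩
  calc Nat.card {S : Submodule F V // Module.finrank F S = k}
      ≤ Nat.card (Submodule F V) := Nat.card_le_card_of_injective _ Subtype.val_injective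
    _ = Fintype.card (Submodule F V) := Nat.card_eq_fintype_card
    _ ≤ M.rank + 1 := card_le_rank_add_one_of_inf_ne_bot M hM

/-- Rank lower bound for the bipartite adjacency matrix of `P_d` over `ℝ`:
`rank(M) ≥ N_{⌊d/2⌋} − 1 ≥ q^{⌊d/2⌋·⌈d/2⌉} − 1`, where `N_k` is the number of
`k`-dimensional subspaces of `F^d`. -/
theorem stmt_3 (F : Type) [Field F] [Fintype F] (d : ℕ) (hd : 1 ≤ d)
    (q : ℕ) (hq : q = Fintype.card F)
    (M : Matrix (Submodule F (Fin d → F)) (Submodule F (Fin d → F)) ℝ)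
    (hM : ∀ I J, M I J = if I ⊓ J ≠ ⊥ then 1 else 0)
    (N : ℕ → ℕ)
    (hN : ∀ k, N k = Nat.card {S : Submodule F (Fin d → F) // Module.finrank F ↥S = k}) :
    N (d / 2) - 1 ≤ M.rank ∧ q ^ (d / 2 * ((d + 1) / 2)) - 1 ≤ M.rank := by
  subst hq
  obtain ⟨hpow, hrank⟩ := stmt_3_general M hM (k := d / 2) (l := (d + 1) / 2) (by simp; omega)
  rw [← hN] at hpow hrank
  rw [Nat.card_eq_fintype_card] at hpow
  omega
end

section
/- Let F be a finite field with q elements, let D ∈ ℕ, let G_1,…,G_m and H_1,…,H_{m'} be F-linear subspaces of F^D, and let P be a real polynomial of degree at most s. Define the m × m' real matrix N by N(r,t) = P(q^{dim(G_r ∩ H_t)}). Then the rank of N over ℝ is at most Σ_{i=0}^{s} N_i, where N_i denotes the number of i-dimensional F-linear subspaces of F^D. -/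
/-!
A `k`-tuple of vectors lies in `W` exactly when its span does, so `|W| ^ k` is the sum over the
subspaces `S ≤ W` of the number of `k`-tuples spanning `S`, and only subspaces of dimension at most
`k` contribute. By linearity `P(|W|) = ∑_{S ≤ W} c(S)` with `c` supported on dimensions at most
`s`. Since `S ≤ G_r ⊓ H_t` splits as `S ≤ G_r` and `S ≤ H_t`, the matrix `P(|G_r ⊓ H_t|)` factors
through the subspaces of dimension at most `s`.
-/

open Finset Polynomial

theorem natCard_subtype_le_eq_sum {α : Type*} [Finite α] (f : α → ℕ) (s : ℕ) :
    Nat.card {a // f a ≤ s} = ∑ i ∈ range (s + 1), Nat.card {a // f a = i} := by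
  have := Fintype.ofFinite α
  simp only [Nat.card_eq_fintype_card, Fintype.card_subtype]
  rw [card_eq_sum_card_fiberwise (f := f) (t := range (s + 1))
    fun a ha => by simpa [Nat.lt_succ_iff] using ha]
  refine sum_congr rfl fun i hi => congrArg card ?_
  rw [filter_filter]
  exact filter_congr fun a _ => and_iff_right_of_imp fun h => h ▸ mem_range_succ_iff.mp hi

theorem rank_apply_inf_le_card_of_eq_sum {α ι κ K : Type*} [SemilatticeInf α] [DecidableLE α]
    [Fintype κ] [CommSemiring K] [StrongRankCondition K] {f c : α → K} {T : Finset α}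
    (hf : ∀ x, f x = ∑ y ∈ T with y ≤ x, c y) (g : ι → α) (h : κ → α) :
    (Matrix.of fun i j => f (g i ⊓ h j)).rank ≤ #T := by
  let A : Matrix ι T K := .of fun i y => if y ≤ g i then c y else 0
  let B : Matrix T κ K := .of fun y j => if y ≤ h j then 1 else 0
  have factorization : Matrix.of (fun i j => f (g i ⊓ h j)) = A * B := by
    ext i j
    simp only [Matrix.mul_apply, A, B, Matrix.of_apply, hf, ← ite_and, le_inf_iff, sum_filter,
      mul_ite, mul_one, mul_zero, and_comm]
    exact (sum_coe_sort T fun y => if y ≤ g i ∧ y ≤ h j then c y else 0).symm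
  calc (Matrix.of fun i j => f (g i ⊓ h j)).rank = (A * B).rank := by rw [factorization]
    _ ≤ A.rank := Matrix.rank_mul_le_left A B
    _ ≤ Fintype.card T := Matrix.rank_le_card_width A
    _ = #T := Fintype.card_coe T

section SpanningTuples

variable {R M : Type*} [Semiring R] [AddCommMonoid M] [Module R M]

/-- The number of `k`-tuples of vectors whose span is exactly `S` (`0` if there are infinitely
many); for finite modules it is the coefficient of `S` in the expansion of `W ↦ |W| ^ k` as a sum
over the submodules of `W`. -/
noncomputable def spanningTupleCount (k : ℕ) (S : Submodule R M) : ℕ :=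
  Nat.card {v : Fin k → M // Submodule.span R (Set.range v) = S}

/-- The coefficient of `S` in the expansion of `W ↦ P(|W|)` as a sum over the submodules of `W`. -/
noncomputable def spanningTupleWeight {K : Type*} [Semiring K] (P : K[X]) (S : Submodule R M) : K :=
  P.sum fun k a => a * spanningTupleCount k S

theorem spanFinrank_span_range_le {k : ℕ} (v : Fin k → M) :
    (Submodule.span R (Set.range v)).spanFinrank ≤ k := by
  calc _ ≤ (Set.range v).ncard := Submodule.spanFinrank_span_le_ncard_of_finite (Set.finite_range v)
    _ ≤ k := by simpa using Set.ncard_image_le (f := v) (Set.univ : Set (Fin k)).toFinite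

variable [Finite M] [DecidableLE (Submodule R M)] {T : Finset (Submodule R M)}

theorem natCard_pow_eq_sum_spanningTupleCount {k : ℕ}
    (hT : ∀ S : Submodule R M, S.spanFinrank ≤ k → S ∈ T) (W : Submodule R M) :
    Nat.card W ^ k = ∑ S ∈ T with S ≤ W, spanningTupleCount k S := by
  classical
  have := Fintype.ofFinite M
  have mem_iff_span_le (v : Fin k → M) :
      (∀ i, v i ∈ W) ↔ Submodule.span R (Set.range v) ≤ W := by
    rw [Submodule.span_le, Set.range_subset_iff]; rfl
  calc Nat.card W ^ k = Nat.card {v : Fin k → M // ∀ i, v i ∈ W} := by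
        rw [Nat.card_congr (Equiv.subtypePiEquivPi (p := fun _ x => x ∈ W)), Nat.card_fun,
          Nat.card_fin]
    _ = #{v : Fin k → M | Submodule.span R (Set.range v) ≤ W} := by
        simp only [mem_iff_span_le, Nat.card_eq_fintype_card, Fintype.card_subtype]
    _ = ∑ S ∈ T with S ≤ W, #{v ∈ {v : Fin k → M | Submodule.span R (Set.range v) ≤ W} |
          Submodule.span R (Set.range v) = S} :=
        card_eq_sum_card_fiberwise fun v hv => by
          simpa using ⟨hT _ (spanFinrank_span_range_le v), by simpa using hv⟩
    _ = ∑ S ∈ T with S ≤ W, spanningTupleCount k S := by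
        refine sum_congr rfl fun S hS => ?_
        rw [spanningTupleCount, Nat.card_eq_fintype_card, Fintype.card_subtype, filter_filter]
        exact congrArg card <| filter_congr fun v _ =>
          and_iff_right_of_imp fun h => h ▸ (mem_filter.mp hS).2

theorem eval_natCard_eq_sum_spanningTupleWeight {K : Type*} [Semiring K] {P : K[X]}
    (hT : ∀ S : Submodule R M, S.spanFinrank ≤ P.natDegree → S ∈ T) (W : Submodule R M) :
    P.eval (Nat.card W : K) = ∑ S ∈ T with S ≤ W, spanningTupleWeight P S := by
  simp only [eval_eq_sum, spanningTupleWeight, Polynomial.sum_def]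
  rw [sum_comm]
  refine sum_congr rfl fun k hk => ?_
  rw [← mul_sum, ← Nat.cast_pow, natCard_pow_eq_sum_spanningTupleCount
    fun S hS => hT S (hS.trans (le_natDegree_of_mem_supp k hk)), Nat.cast_sum]

end SpanningTuples

theorem rank_eval_natCard_inf_le {R M ι κ K : Type*} [Semiring R] [AddCommMonoid M] [Module R M]
    [Finite M] [Fintype κ] [CommSemiring K] [StrongRankCondition K] {P : K[X]} {s : ℕ}
    (hP : P.natDegree ≤ s) (G : ι → Submodule R M) (H : κ → Submodule R M) :
    (Matrix.of fun i j => P.eval (Nat.card ↥(G i ⊓ H j) : K)).rank ≤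
      Nat.card {S : Submodule R M // S.spanFinrank ≤ s} := by
  classical
  have := Fintype.ofFinite (Submodule R M)
  rw [Nat.card_eq_fintype_card, Fintype.card_subtype]
  exact rank_apply_inf_le_card_of_eq_sum
    (eval_natCard_eq_sum_spanningTupleWeight fun S hS => by simpa using hS.trans hP) G H

theorem stmt_4_general {F V ι κ K : Type*} [DivisionRing F] [Finite F] [AddCommGroup V] [Module F V]
    [FiniteDimensional F V] [Fintype κ] [CommSemiring K] [StrongRankCondition K] {P : K[X]} {s : ℕ}
    (hP : P.natDegree ≤ s) (G : ι → Submodule F V) (H : κ → Submodule F V) :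
    (Matrix.of fun r t => P.eval ((Nat.card F : K) ^ Module.finrank F ↥(G r ⊓ H t))).rank ≤
      ∑ i ∈ range (s + 1), Nat.card {S : Submodule F V // Module.finrank F S = i} := by
  have : Finite V := Module.finite_of_finite F
  have finrank_eq (S : Submodule F V) : Module.finrank F S = S.spanFinrank := by
    rw [Module.finrank_eq_spanFinrank_of_free, Submodule.spanFinrank_top]
  rw [← natCard_subtype_le_eq_sum]
  simp only [← Nat.cast_pow, ← Module.natCard_eq_pow_finrank]
  simpa only [finrank_eq] using rank_eval_natCard_inf_le hP G H

/-- Rank upper bound for matrices whose entries are a fixed polynomial of degree at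
most `s` evaluated at `q^{dim(G_r ∩ H_t)}`: the rank over `ℝ` is at most
`Σ_{i=0}^{s} N_i`, where `N_i` is the number of `i`-dimensional subspaces of `F^D`. -/
theorem stmt_4 (F : Type) [Field F] [Fintype F] (q : ℕ) (hq : q = Fintype.card F)
    (D m m' s : ℕ)
    (G : Fin m → Submodule F (Fin D → F)) (H : Fin m' → Submodule F (Fin D → F))
    (P : Polynomial ℝ) (hP : P.natDegree ≤ s)
    (N : Matrix (Fin m) (Fin m') ℝ)
    (hN : ∀ r t, N r t = P.eval ((q : ℝ) ^ Module.finrank F ↥(G r ⊓ H t))) :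
    N.rank ≤ ∑ i ∈ Finset.range (s + 1),
      Nat.card {S : Submodule F (Fin D → F) // Module.finrank F ↥S = i} := by
  obtain rfl : N = Matrix.of fun r t => P.eval ((q : ℝ) ^ Module.finrank F ↥(G r ⊓ H t)) :=
    Matrix.ext hN
  simpa only [hq, Nat.card_eq_fintype_card] using stmt_4_general hP G H
end

section
/- Let n ≥ 1 and let G be the equality graph: the bipartite graph with both vertex sets equal to {0,1}^n and an edge (x,y) if and only if x = y. If G has a projective realization of dimension d with intersection dimension 1 over a finite field F with q elements, then 2^n ≤ (q^d − 1)/(q − 1); in particular, over F_2 one must have d ≥ n + 1. -/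
/-!
The subspaces `φ x ⊓ ψ x` are nonzero, so each contains a point `p x` of the projective space. If
`p x = p y`, this point lies in both `φ x` and `ψ y`, hence `x = y`. Thus the vertices inject into
projective space, which has `(q ^ d - 1) / (q - 1)` points.
-/

open scoped LinearAlgebra.Projectivization

section Realization

variable {K V ι : Type*} [DivisionRing K] [AddCommGroup V] [Module K V]

theorem exists_projectivization_submodule_le {W : Submodule K V} (hW : W ≠ ⊥) :
    ∃ p : ℙ K V, p.submodule ≤ W := by
  obtain ⟨v, hvW, hv⟩ := Submodule.exists_mem_ne_zero_of_ne_bot hW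
  refine ⟨Projectivization.mk K v hv, ?_⟩
  rwa [Projectivization.submodule_mk, Submodule.span_singleton_le_iff_mem]

theorem projectivization_submodule_ne_bot (p : ℙ K V) : p.submodule ≠ ⊥ := by
  rw [Projectivization.submodule_eq, Ne, Submodule.span_singleton_eq_bot]
  exact p.rep_nonzero

theorem exists_injective_projectivization_of_eq_iff_inf_ne_bot {φ ψ : ι → Submodule K V}
    (hreal : ∀ x y, x = y ↔ φ x ⊓ ψ y ≠ ⊥) :
    ∃ p : ι → ℙ K V, Function.Injective p := by
  choose p hp using fun x ↦ exists_projectivization_submodule_le ((hreal x x).1 rfl)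
  refine ⟨p, fun x y hxy ↦ (hreal x y).2 ?_⟩
  have hφ : (p x).submodule ≤ φ x := (hp x).trans inf_le_left
  have hψ : (p x).submodule ≤ ψ y := hxy ▸ (hp y).trans inf_le_right
  exact ne_bot_of_le_ne_bot (projectivization_submodule_ne_bot (p x)) (le_inf hφ hψ)

end Realization

theorem natCard_projectivization (F V : Type*) [Field F] [Finite F] [AddCommGroup V] [Module F V]
    [Module.Finite F V] :
    Nat.card (ℙ F V) = (Nat.card F ^ Module.finrank F V - 1) / (Nat.card F - 1) := by
  rw [Projectivization.card'', Module.natCard_eq_pow_finrank (K := F)]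

theorem stmt_6_general {F V ι : Type*} [Field F] [Finite F] [AddCommGroup V] [Module F V]
    [Module.Finite F V] {φ ψ : ι → Submodule F V} (hreal : ∀ x y, x = y ↔ φ x ⊓ ψ y ≠ ⊥) :
    ENat.card ι ≤ ((Nat.card F ^ Module.finrank F V - 1) / (Nat.card F - 1) : ℕ) ∧
      ENat.card ι < (Nat.card F ^ Module.finrank F V : ℕ) := by
  obtain ⟨p, hp⟩ := exists_injective_projectivization_of_eq_iff_inf_ne_bot hreal
  have : Finite V := Module.finite_of_finite F
  have hcard : ENat.card ι ≤
      ((Nat.card F ^ Module.finrank F V - 1) / (Nat.card F - 1) : ℕ) := by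
    rw [← natCard_projectivization, ← ENat.card_eq_coe_natCard]
    exact ENat.card_le_card_of_injective hp
  refine ⟨hcard, hcard.trans_lt (Nat.cast_lt.2 ?_)⟩
  exact (Nat.div_le_self _ _).trans_lt (Nat.sub_one_lt (pow_pos Nat.card_pos _).ne')

/-- Lower bound for projective realizations with intersection dimension `1` of the
equality graph on `{0,1}^n`: any such realization of dimension `d` over a finite
field with `q` elements satisfies `2^n ≤ (q^d − 1)/(q − 1)`; in particular, over
`F_2` one must have `d ≥ n + 1`. -/
theorem stmt_6 (n : ℕ) (hn : 1 ≤ n) (F : Type) [Field F] [Fintype F]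
    (q : ℕ) (hq : q = Fintype.card F)
    (d : ℕ) (φX φY : (Fin n → Bool) → Submodule F (Fin d → F))
    (hreal : ∀ x y : Fin n → Bool, x = y ↔ φX x ⊓ φY y ≠ ⊥)
    (hint : ∀ x y : Fin n → Bool, Module.finrank F ↥(φX x ⊓ φY y) ≤ 1) :
    2 ^ n ≤ (q ^ d - 1) / (q - 1) ∧ (q = 2 → n + 1 ≤ d) := by
  obtain ⟨hle, hlt⟩ := stmt_6_general hreal
  simp only [ENat.card_eq_coe_fintype_card, Fintype.card_pi_const, Fintype.card_bool,
    Nat.card_eq_fintype_card, ← hq, Module.finrank_fin_fun, Nat.cast_le, Nat.cast_lt] at hle hlt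
  exact ⟨hle, fun hq2 ↦ (Nat.pow_lt_pow_iff_right one_lt_two).1 (hq2 ▸ hlt)⟩
end

section
/- Let n ≥ 1 and let G be the disjointness graph: the bipartite graph with both vertex sets equal to {0,1}^n and an edge (x,y) if and only if x_i ∧ y_i = 0 for every i ∈ [n]. If G has a projective realization of dimension d with intersection dimension 1 over a finite field F with q elements, then 2^n ≤ (q^d − 1)/(q − 1). -/
/-!
A projective space over `F` of vector dimension `k` has `1 + q + ⋯ + q ^ (k - 1)` points, where
`q = |F|`. Since `q = 0` in `F`, this number is `1` in `F` if `k ≠ 0` and `0` otherwise. Counting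
the points of `φ x ⊓ ψ y` therefore factors the biadjacency matrix over `F` of a realized graph
through `ℙ F V`, so its rank is at most the number of points of `ℙ F V`. For the disjointness graph,
complementing the second coordinate turns `Disjoint x y` into `x ≤ y`, so the biadjacency matrix is
invertible by Möbius inversion.
-/

open scoped LinearAlgebra.Projectivization Matrix

section BiadjMatrix

variable {α β γ R : Type*}

open scoped Classical in
/-- The biadjacency matrix, with entries in `R`, of the bipartite graph whose edge relation is `r`.
It also serves as the incidence matrix between the vertices of a realized graph and the projective
points on their subspaces. -/
noncomputable def biadjMatrix (R : Type*) [Zero R] [One R] (r : α → β → Prop) : Matrix α β R :=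
  Matrix.of fun x y => if r x y then 1 else 0

open scoped Classical in
theorem biadjMatrix_apply [Zero R] [One R] (r : α → β → Prop) (x : α) (y : β) :
    biadjMatrix R r x y = if r x y then 1 else 0 :=
  rfl

theorem biadjMatrix_mul_transpose_apply [NonAssocSemiring R] [Fintype γ] (r : α → γ → Prop)
    (s : β → γ → Prop) (x : α) (y : β) :
    (biadjMatrix R r * (biadjMatrix R s)ᵀ) x y = (Nat.card {p // r x p ∧ s y p} : R) := by
  classical
  simp [Matrix.mul_apply, biadjMatrix_apply, ← ite_and, Nat.card_eq_fintype_card,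
    Fintype.card_subtype, Finset.filter_and, Finset.inter_comm]

theorem isUnit_biadjMatrix_le (R : Type*) [CommRing R] [PartialOrder α] [Fintype α]
    [DecidableEq α] : IsUnit (biadjMatrix R ((· ≤ ·) : α → α → Prop)) := by
  classical
  let _ : LocallyFiniteOrder α := Fintype.toLocallyFiniteOrder
  let moebius : Matrix α α R := Matrix.of fun x y => IncidenceAlgebra.mu R x y
  suffices moebius * biadjMatrix R (· ≤ ·) = 1 from
    IsUnit.of_mul_eq_one_right moebius this
  ext x y
  calc (moebius * biadjMatrix R ((· ≤ ·) : α → α → Prop)) x y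
      = ∑ z, IncidenceAlgebra.mu R x z * IncidenceAlgebra.zeta R z y := by
        simp [Matrix.mul_apply, moebius, biadjMatrix_apply]
    _ = ∑ z ∈ Finset.Icc x y, IncidenceAlgebra.mu R x z * IncidenceAlgebra.zeta R z y := by
        refine (Finset.sum_subset (Finset.subset_univ _) fun z _ hz => ?_).symm
        rw [Finset.mem_Icc, not_and_or] at hz
        obtain hxz | hzy := hz
        · rw [IncidenceAlgebra.apply_eq_zero_of_not_le hxz, zero_mul]
        · rw [IncidenceAlgebra.apply_eq_zero_of_not_le hzy, mul_zero]
    _ = (1 : Matrix α α R) x y := by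
        rw [← IncidenceAlgebra.mul_apply, IncidenceAlgebra.mu_mul_zeta,
          IncidenceAlgebra.one_apply, Matrix.one_apply]

theorem rank_biadjMatrix_disjoint (R : Type*) [CommRing R] [Nontrivial R]
    [BooleanAlgebra α] [Fintype α] :
    (biadjMatrix R (Disjoint : α → α → Prop)).rank = Fintype.card α := by
  classical
  have compl_columns : (biadjMatrix R (Disjoint : α → α → Prop)).submatrix
      (Equiv.refl α) (compl_involutive.toPerm compl) = biadjMatrix R (· ≤ ·) := by
    ext x y
    simp [biadjMatrix_apply, disjoint_compl_right_iff]
  rw [← Matrix.rank_submatrix _ (Equiv.refl α) (compl_involutive.toPerm compl), compl_columns,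
    Matrix.rank_of_isUnit _ (isUnit_biadjMatrix_le R)]

end BiadjMatrix

section PointCount

theorem card_points_of_submodule {K V : Type*} [DivisionRing K] [AddCommGroup V] [Module K V]
    (W : Submodule K V) :
    Nat.card {p : ℙ K V // p.submodule ≤ W} = Nat.card (ℙ K W) := by
  have range_map : Set.range (Projectivization.map W.subtype W.injective_subtype) =
      {p : ℙ K V | p.submodule ≤ W} := by
    ext p
    induction p using Projectivization.ind with | h v hv =>
    simp only [Set.mem_range, Set.mem_ofPred_eq, Projectivization.submodule_mk,
      Submodule.span_singleton_le_iff_mem]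
    constructor
    · rintro ⟨p, hp⟩
      induction p using Projectivization.ind with | h w hw =>
      obtain ⟨a, rfl⟩ := (Projectivization.mk_eq_mk_iff' K _ _ hv _).1 hp.symm
      exact W.smul_mem a w.2
    · intro hvW
      exact ⟨.mk K ⟨v, hvW⟩ (by simpa using hv), rfl⟩
  rw [← Nat.card_range_of_injective (Projectivization.map_injective W.subtype W.injective_subtype),
    range_map]
  rfl

variable {F V : Type*} [Field F] [AddCommGroup V] [Module F V]

theorem natCast_card_projectivization [Finite F] :
    (Nat.card (ℙ F V) : F) = if Module.finrank F V = 0 then 0 else 1 := by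
  have := Fintype.ofFinite F
  have card_F : (Nat.card F : F) = 0 := by
    rw [Nat.card_eq_fintype_card, Nat.cast_card_eq_zero]
  rw [Projectivization.card_of_finrank F V rfl]
  push_cast
  rw [card_F, zero_geom_sum]

open scoped Classical in
theorem natCast_card_points_of_submodule [Finite F] [Module.Finite F V] (W : Submodule F V) :
    (Nat.card {p : ℙ F V // p.submodule ≤ W} : F) = if W = ⊥ then 0 else 1 := by
  simp only [card_points_of_submodule, natCast_card_projectivization,
    Submodule.finrank_eq_zero]

end PointCount

section Realization

variable {F V X Y : Type*} [Field F] [AddCommGroup V] [Module F V]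

/-- `φ` and `ψ` form a projective realization, in the vector space `V`, of the bipartite graph with
edge relation `E`: adjacency means that the assigned subspaces meet nontrivially. -/
def IsProjectiveRealization (E : X → Y → Prop) (φ : X → Submodule F V) (ψ : Y → Submodule F V) :
    Prop :=
  ∀ x y, E x y ↔ φ x ⊓ ψ y ≠ ⊥

namespace IsProjectiveRealization

variable {E : X → Y → Prop} {φ : X → Submodule F V} {ψ : Y → Submodule F V}

theorem biadjMatrix_eq_mul_transpose [Finite F] [Module.Finite F V] [Fintype (ℙ F V)]
    (h : IsProjectiveRealization E φ ψ) :
    biadjMatrix F E = biadjMatrix F (fun x (p : ℙ F V) => p.submodule ≤ φ x) *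
      (biadjMatrix F fun y (p : ℙ F V) => p.submodule ≤ ψ y)ᵀ := by
  ext x y
  simp only [biadjMatrix_mul_transpose_apply, ← le_inf_iff,
    natCast_card_points_of_submodule, biadjMatrix_apply, h x y, ite_not]

theorem rank_biadjMatrix_le [Finite F] [Module.Finite F V] [Fintype Y]
    (h : IsProjectiveRealization E φ ψ) :
    (biadjMatrix F E).rank ≤ Nat.card (ℙ F V) := by
  have : Finite V := Module.finite_of_finite F
  have := Fintype.ofFinite (ℙ F V)
  rw [h.biadjMatrix_eq_mul_transpose, Nat.card_eq_fintype_card]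
  exact (Matrix.rank_mul_le_left _ _).trans (Matrix.rank_le_card_width _)

theorem card_le_of_disjoint [Finite F] [Module.Finite F V] [BooleanAlgebra X] [Fintype X]
    {φ ψ : X → Submodule F V} (h : IsProjectiveRealization Disjoint φ ψ) :
    Fintype.card X ≤ Nat.card (ℙ F V) :=
  (rank_biadjMatrix_disjoint F).symm.trans_le h.rank_biadjMatrix_le

end IsProjectiveRealization

end Realization

theorem stmt_7_general (n : ℕ) {F V : Type*} [Field F] [Fintype F] [AddCommGroup V] [Module F V]
    [Module.Finite F V] (q : ℕ) (hq : q = Fintype.card F)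
    (φX φY : (Fin n → Bool) → Submodule F V)
    (hreal : ∀ x y : Fin n → Bool, (∀ i, (x i && y i) = false) ↔ φX x ⊓ φY y ≠ ⊥) :
    2 ^ n ≤ (q ^ Module.finrank F V - 1) / (q - 1) := by
  have realizes_disjoint : IsProjectiveRealization Disjoint φX φY := fun x y => by
    rw [← hreal, Pi.disjoint_iff]
    simp [disjoint_iff]
  calc 2 ^ n = Fintype.card (Fin n → Bool) := by simp
    _ ≤ Nat.card (ℙ F V) := realizes_disjoint.card_le_of_disjoint
    _ = (q ^ Module.finrank F V - 1) / (q - 1) := by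
        rw [Projectivization.card'', Module.natCard_eq_pow_finrank (K := F),
          Nat.card_eq_fintype_card, ← hq]

/-- Lower bound for projective realizations with intersection dimension `1` of the
disjointness graph on `{0,1}^n`: any such realization of dimension `d` over a finite
field with `q` elements satisfies `2^n ≤ (q^d − 1)/(q − 1)`. -/
theorem stmt_7 (n : ℕ) (hn : 1 ≤ n) (F : Type) [Field F] [Fintype F]
    (q : ℕ) (hq : q = Fintype.card F)
    (d : ℕ) (φX φY : (Fin n → Bool) → Submodule F (Fin d → F))
    (hreal : ∀ x y : Fin n → Bool, (∀ i, (x i && y i) = false) ↔ φX x ⊓ φY y ≠ ⊥)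
    (hint : ∀ x y : Fin n → Bool, Module.finrank F ↥(φX x ⊓ φY y) ≤ 1) :
    2 ^ n ≤ (q ^ d - 1) / (q - 1) := by
  simpa using stmt_7_general n q hq φX φY hreal
end

section
/- Let F be a field, let U and V be vertex sets, and let G_1 = (U,V,E_1) and G_2 = (U,V,E_2) be bipartite graphs on these vertex sets admitting projective realizations over F of dimensions d_1 and d_2 respectively. Then the bipartite graph (U, V, E_1 ∩ E_2) admits a projective realization over F of dimension d_1 · d_2. In particular, for Boolean functions f_1, f_2 on {0,1}^n × {0,1}^n, pd_F(f_1 ∧ f_2) ≤ pd_F(f_1) · pd_F(f_2). -/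
/-! Replace a pair of subspaces of `F ^ d₁` and `F ^ d₂` by their tensor product, viewed as the
space of `d₁ × d₂` matrices with columns in the first and rows in the second. These matrix spaces
intersect componentwise, and such a space is nonzero exactly when both factors are: an outer
product of nonzero vectors is nonzero, and a nonzero matrix has a nonzero column and a nonzero
row. -/

theorem exists_apply_apply_ne_zero {R m n : Type*} [Zero R] {M : Matrix m n R} (hM : M ≠ 0) :
    ∃ i j, M i j ≠ 0 := by
  contrapose! hM
  exact Matrix.ext hM

theorem vecMulVec_ne_zero {R m n : Type*} [MulZeroClass R] [NoZeroDivisors R] {a : m → R}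
    {b : n → R} (ha : a ≠ 0) (hb : b ≠ 0) : Matrix.vecMulVec a b ≠ 0 := by
  obtain ⟨i, hi⟩ := Function.ne_iff.mp ha
  obtain ⟨j, hj⟩ := Function.ne_iff.mp hb
  exact fun h => mul_ne_zero hi hj (congrFun₂ h i j)

/-- Matrices with columns in `A` and rows in `B`. Over a field and finite index types this is the
tensor product `A ⊗ B`; conditions on columns and rows, rather than a span of outer products, make
intersections immediate. -/
def colRowSubmodule {R m n : Type*} [Semiring R]
    (A : Submodule R (m → R)) (B : Submodule R (n → R)) : Submodule R (Matrix m n R) where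
  carrier := {M | (∀ j, M.col j ∈ A) ∧ ∀ i, M.row i ∈ B}
  add_mem' hM hN := ⟨fun j => A.add_mem (hM.1 j) (hN.1 j), fun i => B.add_mem (hM.2 i) (hN.2 i)⟩
  zero_mem' := ⟨fun _ => A.zero_mem, fun _ => B.zero_mem⟩
  smul_mem' c _ hM := ⟨fun j => A.smul_mem c (hM.1 j), fun i => B.smul_mem c (hM.2 i)⟩

section Semiring

variable {R m n : Type*} [Semiring R] {A A' : Submodule R (m → R)} {B B' : Submodule R (n → R)}

theorem mem_colRowSubmodule {M : Matrix m n R} :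
    M ∈ colRowSubmodule A B ↔ (∀ j, M.col j ∈ A) ∧ ∀ i, M.row i ∈ B :=
  Iff.rfl

theorem colRowSubmodule_inf_colRowSubmodule :
    colRowSubmodule A B ⊓ colRowSubmodule A' B' = colRowSubmodule (A ⊓ A') (B ⊓ B') := by
  ext M
  simp only [Submodule.mem_inf, mem_colRowSubmodule, forall_and]
  exact and_and_and_comm

end Semiring

section CommSemiring

variable {R m n : Type*} [CommSemiring R] {A : Submodule R (m → R)} {B : Submodule R (n → R)}

theorem vecMulVec_mem_colRowSubmodule {a : m → R} {b : n → R} (ha : a ∈ A) (hb : b ∈ B) :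
    Matrix.vecMulVec a b ∈ colRowSubmodule A B := by
  refine mem_colRowSubmodule.mpr ⟨fun j => ?_, fun i => ?_⟩
  · rw [Matrix.col_vecMulVec, op_smul_eq_smul]
    exact A.smul_mem (b j) ha
  · rw [Matrix.row_vecMulVec]
    exact B.smul_mem (a i) hb

theorem colRowSubmodule_ne_bot_iff [NoZeroDivisors R] :
    colRowSubmodule A B ≠ ⊥ ↔ A ≠ ⊥ ∧ B ≠ ⊥ := by
  simp only [Submodule.ne_bot_iff]
  constructor
  · rintro ⟨M, hM, hM_ne⟩
    obtain ⟨hcol, hrow⟩ := mem_colRowSubmodule.mp hM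
    obtain ⟨i, j, hij⟩ := exists_apply_apply_ne_zero hM_ne
    exact ⟨⟨M.col j, hcol j, Function.ne_iff.mpr ⟨i, hij⟩⟩,
      ⟨M.row i, hrow i, Function.ne_iff.mpr ⟨j, hij⟩⟩⟩
  · rintro ⟨⟨a, ha, ha_ne⟩, ⟨b, hb, hb_ne⟩⟩
    exact ⟨Matrix.vecMulVec a b, vecMulVec_mem_colRowSubmodule ha hb,
      vecMulVec_ne_zero ha_ne hb_ne⟩

end CommSemiring

/-- Realization of a relation by nontrivial intersection of submodules of an arbitrary module;
`IsProjRealization` is the case of the coordinate space `Fin D → F`. -/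
def IsSubmoduleRealization {R M U V : Type*} [Semiring R] [AddCommMonoid M] [Module R M]
    (E : U → V → Prop) (φU : U → Submodule R M) (φV : V → Submodule R M) : Prop :=
  ∀ u v, E u v ↔ φU u ⊓ φV v ≠ ⊥

theorem IsSubmoduleRealization.map {R M N U V : Type*} [Semiring R] [AddCommMonoid M] [Module R M]
    [AddCommMonoid N] [Module R N] {E : U → V → Prop} {φU : U → Submodule R M}
    {φV : V → Submodule R M} (h : IsSubmoduleRealization E φU φV) {f : M →ₗ[R] N}
    (hf : Function.Injective f) :
    IsSubmoduleRealization E (fun u => (φU u).map f) (fun v => (φV v).map f) := by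
  intro u v
  rw [h u v, ← Submodule.map_inf f hf]
  exact ((Submodule.map_injective_of_injective hf).ne_iff' (Submodule.map_bot f)).symm

/-- The reading of a `d₁ × d₂` matrix as a vector of length `d₁ * d₂`, row by row. -/
def flattenMatrix (R : Type*) [Semiring R] (d₁ d₂ : ℕ) :
    Matrix (Fin d₁) (Fin d₂) R ≃ₗ[R] (Fin (d₁ * d₂) → R) :=
  (Matrix.ofLinearEquiv R).symm ≪≫ₗ (LinearEquiv.curry R R (Fin d₁) (Fin d₂)).symm ≪≫ₗ
    LinearEquiv.funCongrLeft R R finProdFinEquiv.symm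

theorem stmt_9_general {R m n U V : Type*} [CommSemiring R] [NoZeroDivisors R]
    {E₁ E₂ : U → V → Prop}
    {φU₁ : U → Submodule R (m → R)} {φV₁ : V → Submodule R (m → R)}
    {φU₂ : U → Submodule R (n → R)} {φV₂ : V → Submodule R (n → R)}
    (h₁ : IsSubmoduleRealization E₁ φU₁ φV₁) (h₂ : IsSubmoduleRealization E₂ φU₂ φV₂) :
    IsSubmoduleRealization (fun u v => E₁ u v ∧ E₂ u v)
      (fun u => colRowSubmodule (φU₁ u) (φU₂ u)) (fun v => colRowSubmodule (φV₁ v) (φV₂ v)) := by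
  intro u v
  calc
    E₁ u v ∧ E₂ u v ↔ φU₁ u ⊓ φV₁ v ≠ ⊥ ∧ φU₂ u ⊓ φV₂ v ≠ ⊥ := and_congr (h₁ u v) (h₂ u v)
    _ ↔ colRowSubmodule (φU₁ u ⊓ φV₁ v) (φU₂ u ⊓ φV₂ v) ≠ ⊥ := colRowSubmodule_ne_bot_iff.symm
    _ ↔ colRowSubmodule (φU₁ u) (φU₂ u) ⊓ colRowSubmodule (φV₁ v) (φV₂ v) ≠ ⊥ := by
      rw [colRowSubmodule_inf_colRowSubmodule]

/-- AND lemma for projective dimension: if bipartite graphs `(U, V, E₁)` and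
`(U, V, E₂)` have projective realizations over `F` of dimensions `d₁` and `d₂`,
then `(U, V, E₁ ∩ E₂)` has a projective realization over `F` of dimension
`d₁ · d₂`; in particular `pd_F(f₁ ∧ f₂) ≤ pd_F(f₁) · pd_F(f₂)`. -/
theorem stmt_9 (F : Type) [Field F] (U V : Type) (E₁ E₂ : U → V → Prop)
    (d₁ d₂ : ℕ)
    (φU₁ : U → Submodule F (Fin d₁ → F)) (φV₁ : V → Submodule F (Fin d₁ → F))
    (φU₂ : U → Submodule F (Fin d₂ → F)) (φV₂ : V → Submodule F (Fin d₂ → F))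
    (h₁ : IsProjRealization F E₁ d₁ φU₁ φV₁)
    (h₂ : IsProjRealization F E₂ d₂ φU₂ φV₂) :
    ∃ (φU : U → Submodule F (Fin (d₁ * d₂) → F))
      (φV : V → Submodule F (Fin (d₁ * d₂) → F)),
      IsProjRealization F (fun u v => E₁ u v ∧ E₂ u v) (d₁ * d₂) φU φV :=
  ⟨_, _, (stmt_9_general h₁ h₂).map (flattenMatrix F d₁ d₂).injective⟩
end

section
/- Let F be a field, G = (U, V, E) a finite bipartite graph, and d ∈ ℕ. Then G has a standard projective realization of dimension d over F with intersection dimension 1 if and only if G has a biclique partition of size at most d. Consequently, the standard projective dimension with intersection dimension 1 of G equals its biclique partition number: uspd(G) = bp(G). -/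
/-- A standard projective realization of dimension `d` over `F` with intersection
dimension `1`: every assigned subspace is spanned by a subset of the standard basis
vectors of `F^d`, edges correspond to nontrivial intersections, and every pairwise
intersection has dimension at most `1`. -/
def HasStdRealizationIntOne (F : Type) [Field F] {U V : Type} (E : U → V → Prop)
    (d : ℕ) : Prop :=
  ∃ (φU : U → Submodule F (Fin d → F)) (φV : V → Submodule F (Fin d → F)),
    (∀ u, ∃ s : Set (Fin d),
        φU u = Submodule.span F ((fun i => Pi.single i (1 : F)) '' s)) ∧
    (∀ v, ∃ s : Set (Fin d),
        φV v = Submodule.span F ((fun i => Pi.single i (1 : F)) '' s)) ∧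
    (∀ u v, E u v ↔ φU u ⊓ φV v ≠ ⊥) ∧
    (∀ u v, Module.finrank F ↥(φU u ⊓ φV v) ≤ 1)

/-- A biclique partition of size at most `k`: bicliques `A t × B t` contained in `E`
whose union is `E`, with every edge belonging to exactly one biclique. -/
def HasBicliquePartition {U V : Type} (E : U → V → Prop) (k : ℕ) : Prop :=
  ∃ (A : Fin k → Set U) (B : Fin k → Set V),
    (∀ t u v, u ∈ A t → v ∈ B t → E u v) ∧
    (∀ u v, E u v → ∃! t, u ∈ A t ∧ v ∈ B t)

section CoordinateSubspace

variable {R ι : Type*} [Semiring R] [Finite ι]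

theorem spanSubset_inf_spanSubset (s t : Set ι) :
    Pi.spanSubset R s ⊓ Pi.spanSubset R t = Pi.spanSubset R (s ∩ t) := by
  ext x
  simp only [Submodule.mem_inf, Pi.mem_spanSubset_iff, Set.mem_inter_iff, not_and_or, or_imp,
    forall_and]

theorem spanSubset_eq_bot_iff [Nontrivial R] {s : Set ι} : Pi.spanSubset R s = ⊥ ↔ s = ∅ := by
  simp only [Pi.spanSubset, Submodule.span_eq_bot, Set.forall_mem_image, (Pi.basisFun R ι).ne_zero,
    Set.eq_empty_iff_forall_notMem, imp_false]

theorem finrank_spanSubset_inf_spanSubset [StrongRankCondition R] (s t : Set ι) :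
    Module.finrank R ↥(Pi.spanSubset R s ⊓ Pi.spanSubset R t) = (s ∩ t).ncard := by
  have : Nontrivial R := nontrivial_of_invariantBasisNumber R
  rw [spanSubset_inf_spanSubset, Pi.dim_spanSubset]

end CoordinateSubspace

section Bipartite

variable {U V : Type*} {E : U → V → Prop}

/-- Families of label sets `S u` and `T v` such that `u` and `v` are adjacent exactly when they
share a label, and no pair shares more than one. They encode both a standard realization, with `S u`
the set of basis vectors spanning `φ(u)`, and a biclique partition, with `S u` the set of
bicliques containing `u`. -/
def IsUniqueLabelling {ι : Type*} (E : U → V → Prop) (S : U → Set ι) (T : V → Set ι) : Prop :=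
  ∀ u v, (E u v ↔ (S u ∩ T v).Nonempty) ∧ (S u ∩ T v).Subsingleton

theorem isUniqueLabelling_iff_spanSubset {ι : Type*} [Finite ι] (R : Type*) [Semiring R]
    [StrongRankCondition R] {S : U → Set ι} {T : V → Set ι} :
    IsUniqueLabelling E S T ↔
      (∀ u v, E u v ↔ Pi.spanSubset R (S u) ⊓ Pi.spanSubset R (T v) ≠ ⊥) ∧
        ∀ u v, Module.finrank R ↥(Pi.spanSubset R (S u) ⊓ Pi.spanSubset R (T v)) ≤ 1 := by
  have : Nontrivial R := nontrivial_of_invariantBasisNumber R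
  simp only [IsUniqueLabelling, forall_and, finrank_spanSubset_inf_spanSubset,
    spanSubset_inf_spanSubset, ne_eq, spanSubset_eq_bot_iff, Set.nonempty_iff_ne_empty,
    Set.ncard_le_one_iff_subsingleton]

theorem isUniqueLabelling_iff_existsUnique {ι : Type*} {S : U → Set ι} {T : V → Set ι} :
    IsUniqueLabelling E S T ↔
      (∀ t u v, t ∈ S u → t ∈ T v → E u v) ∧ ∀ u v, E u v → ∃! t, t ∈ S u ∧ t ∈ T v := by
  constructor
  · intro h
    refine ⟨fun t u v hu hv ↦ (h u v).1.mpr ⟨t, hu, hv⟩, fun u v huv ↦ ?_⟩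
    obtain ⟨t, ht⟩ := (h u v).1.mp huv
    exact ⟨t, ht, fun t' ht' ↦ (h u v).2 ht' ht⟩
  · rintro ⟨subset, unique⟩ u v
    exact ⟨⟨fun huv ↦ (unique u v huv).exists, fun ⟨t, hu, hv⟩ ↦ subset t u v hu hv⟩,
      fun t ht t' ht' ↦ (unique u v (subset t u v ht.1 ht.2)).unique ht ht'⟩

end Bipartite

section Realization

variable {U V : Type} {E : U → V → Prop} {d : ℕ}

theorem hasStdRealizationIntOne_iff_exists_isUniqueLabelling (F : Type) [Field F] :
    HasStdRealizationIntOne F E d ↔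
      ∃ (S : U → Set (Fin d)) (T : V → Set (Fin d)), IsUniqueLabelling E S T := by
  have span_eq (s : Set (Fin d)) :
      Submodule.span F ((fun i ↦ Pi.single i (1 : F)) '' s) = Pi.spanSubset F s := by
    simp only [Pi.spanSubset, Pi.basisFun_apply]
  simp only [HasStdRealizationIntOne, span_eq, isUniqueLabelling_iff_spanSubset F]
  constructor
  · rintro ⟨φU, φV, hU, hV, h⟩
    choose S hS using hU
    choose T hT using hV
    obtain rfl : φU = fun u ↦ Pi.spanSubset F (S u) := funext hS
    obtain rfl : φV = fun v ↦ Pi.spanSubset F (T v) := funext hT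
    exact ⟨S, T, h⟩
  · rintro ⟨S, T, h⟩
    exact ⟨_, _, fun u ↦ ⟨S u, rfl⟩, fun v ↦ ⟨T v, rfl⟩, h⟩

theorem hasBicliquePartition_iff_exists_isUniqueLabelling :
    HasBicliquePartition E d ↔
      ∃ (S : U → Set (Fin d)) (T : V → Set (Fin d)), IsUniqueLabelling E S T := by
  simp only [isUniqueLabelling_iff_existsUnique]
  constructor
  · rintro ⟨A, B, h⟩
    exact ⟨fun u ↦ {t | u ∈ A t}, fun v ↦ {t | v ∈ B t}, h⟩
  · rintro ⟨S, T, h⟩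
    exact ⟨fun t ↦ {u | t ∈ S u}, fun t ↦ {v | t ∈ T v}, h⟩

end Realization

theorem stmt_15_general (F : Type) [Field F] {U V : Type} (E : U → V → Prop) (d : ℕ) :
    HasStdRealizationIntOne F E d ↔ HasBicliquePartition E d :=
  (hasStdRealizationIntOne_iff_exists_isUniqueLabelling F).trans
    hasBicliquePartition_iff_exists_isUniqueLabelling.symm

/-- A finite bipartite graph has a standard projective realization of dimension `d`
over `F` with intersection dimension `1` iff it has a biclique partition of size at
most `d`; consequently `uspd(G) = bp(G)`. -/
theorem stmt_15 (F : Type) [Field F] (U V : Type) [Fintype U] [Fintype V]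
    (E : U → V → Prop) (d : ℕ) :
    (HasStdRealizationIntOne F E d ↔ HasBicliquePartition E d) ∧
      sInf {k : ℕ | HasStdRealizationIntOne F E k} =
        sInf {k : ℕ | HasBicliquePartition E k} := by
  exact ⟨stmt_15_general F E d, by simp only [stmt_15_general]⟩
end

section
/- There exists an absolute constant γ > 0 with the following property. Let n, m ≥ 1, let f : {0,1}^n × {0,1}^n → {0,1} be a Boolean function, and let T_1,…,T_m be pairwise disjoint subsets of [n]. For each i, let c_i(f) be the number of distinct functions g : {0,1}^{T_i} → {0,1} that arise as restrictions of f obtained by fixing all x-variables outside T_i and all y-variables to constants, and assume c_i(f) ≥ 16 for every i. Then every bitwise decomposable projective assignment for f of dimension D over F_2 satisfies D ≥ γ · Σ_{i=1}^m (log c_i(f)) / (log log c_i(f)). -/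
/-- A subspace of `F_2^D` spanned by a subset of the vectors `e_k − e_l` (`k ≠ l`),
where `e_1, …, e_D` is the standard basis. -/
def IsDiffSpanned {D : ℕ} (W : Submodule (ZMod 2) (Fin D → ZMod 2)) : Prop :=
  ∃ S : Set (Fin D → ZMod 2),
    (∀ w ∈ S, ∃ k l : Fin D, k ≠ l ∧
        w = Pi.single k (1 : ZMod 2) - Pi.single l (1 : ZMod 2)) ∧
    W = Submodule.span (ZMod 2) S

/-- A bitwise decomposable projective assignment of dimension `D` over `F_2` for a
Boolean function `f : {0,1}^n × {0,1}^n → {0,1}`: subspaces `U i a`, `V j b` of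
`F_2^D`, each spanned by difference vectors of standard basis vectors, such that
`φ(x) = span(∪ᵢ U i xᵢ)` and `φ(y) = span(∪ⱼ V j yⱼ)` realize `f`, and spans of
disjoint sub-collections (on each side) intersect trivially. -/
def IsBitDecompAssignment {n : ℕ}
    (f : (Fin n → Bool) → (Fin n → Bool) → Bool) (D : ℕ)
    (U V : Fin n → Bool → Submodule (ZMod 2) (Fin D → ZMod 2)) : Prop :=
  (∀ i a, IsDiffSpanned (U i a)) ∧
  (∀ j b, IsDiffSpanned (V j b)) ∧
  (∀ x y : Fin n → Bool,
      f x y = true ↔ (⨆ i, U i (x i)) ⊓ (⨆ j, V j (y j)) ≠ ⊥) ∧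
  (∀ S₁ S₂ : Set (Fin n × Bool), Disjoint S₁ S₂ →
      (⨆ p ∈ S₁, U p.1 p.2) ⊓ (⨆ p ∈ S₂, U p.1 p.2) = ⊥) ∧
  (∀ S₁ S₂ : Set (Fin n × Bool), Disjoint S₁ S₂ →
      (⨆ p ∈ S₁, V p.1 p.2) ⊓ (⨆ p ∈ S₂, V p.1 p.2) = ⊥)

/-!
A subspace `N` spanned by difference vectors only records which coordinates are connected: for a
set `S` of coordinates, the vectors of `N` supported in `S` are spanned by the differences
`e_k - e_l ∈ N` with `k, l ∈ S`, so they are determined by an equivalence relation on `S`.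

Fix a block `T` of `x`-variables, and let `S` be the support of the space `W` spanned by the
subspaces of the block, so that `|S| ≤ 2 dim W`. Write `φ(x) = A ⊔ R`, where `A ≤ W` comes from
the block and `R` from the fixed variables. If `R` meets `φ(y)`, the restriction is constantly
true. Otherwise modularity shows that `A ⊔ R` meets `φ(y)` iff `A` meets `R ⊔ φ(y)`, and this
depends only on the equivalence relation induced by `R ⊔ φ(y)` on `S`. Hence the block has at most
`|S| ^ |S| + 1` restrictions. The spaces `W` of disjoint blocks are independent, so their
dimensions add up to at most `D`.
-/

section DifferenceSpans

variable {R κ : Type*} [Ring R] [DecidableEq κ]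

/-- A submodule of `κ → R` spanned by differences of standard basis vectors, given by the edge
set `E` of a directed graph on the coordinates; loops only contribute the zero vector. -/
def IsDifferenceSpan (N : Submodule R (κ → R)) : Prop :=
  ∃ E : Set (κ × κ),
    N = Submodule.span R ((fun e => Pi.single e.1 1 - Pi.single e.2 1) '' E)

theorem IsDifferenceSpan.iSup {ι : Sort*} {N : ι → Submodule R (κ → R)}
    (hN : ∀ i, IsDifferenceSpan (N i)) : IsDifferenceSpan (⨆ i, N i) := by
  choose E hE using hN
  exact ⟨⋃ i, E i, by rw [Set.image_iUnion, Submodule.span_iUnion]; exact iSup_congr hE⟩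

theorem IsDifferenceSpan.sup {M N : Submodule R (κ → R)}
    (hM : IsDifferenceSpan M) (hN : IsDifferenceSpan N) : IsDifferenceSpan (M ⊔ N) := by
  rw [sup_eq_iSup]
  exact .iSup (Bool.forall_bool.2 ⟨hN, hM⟩)

/-- The equivalence relation on the coordinates in `S` that relates `k` and `l` when
`e_k - e_l ∈ N`. -/
def connectedSetoid (N : Submodule R (κ → R)) (S : Set κ) : Setoid S :=
  Setoid.ker fun k : S => N.mkQ (Pi.single (k : κ) 1)

theorem connectedSetoid_iff {N : Submodule R (κ → R)} {S : Set κ} {k l : S} :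
    connectedSetoid N S k l ↔
      (Pi.single (k : κ) 1 - Pi.single (l : κ) 1 : κ → R) ∈ N :=
  Submodule.Quotient.eq N

variable (R) in
/-- The span of the differences `e_k - e_l` over the pairs `k, l ∈ S` related by `s`. -/
def setoidSpan {S : Set κ} (s : Setoid S) : Submodule R (κ → R) :=
  Submodule.span R {v | ∃ k l : S, s k l ∧ v = Pi.single (k : κ) 1 - Pi.single (l : κ) 1}

theorem setoidSpan_connectedSetoid_le (N : Submodule R (κ → R)) (S : Set κ) :
    setoidSpan R (connectedSetoid N S) ≤ N := by
  refine Submodule.span_le.2 ?_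
  rintro _ ⟨k, l, hkl, rfl⟩
  exact connectedSetoid_iff.1 hkl

theorem IsDifferenceSpan.mem_setoidSpan_of_support_subset [Finite κ]
    {N : Submodule R (κ → R)} (hN : IsDifferenceSpan N) {S : Set κ} {v : κ → R} (hv : v ∈ N)
    (hvS : Function.support v ⊆ S) : v ∈ setoidSpan R (connectedSetoid N S) := by
  cases nonempty_fintype κ
  set P := setoidSpan R (connectedSetoid N S)
  let toN : κ → (κ → R) ⧸ N := fun k => N.mkQ (Pi.single k 1)
  let toP : κ → (κ → R) ⧸ P := fun k => P.mkQ (Pi.single k 1)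
  have factors : (fun k : S => toP k).FactorsThrough (fun k : S => toN k) := fun k l hkl =>
    (Submodule.Quotient.eq P).2 (Submodule.subset_span ⟨k, l, hkl, rfl⟩)
  -- The restriction of `toP` to `S` extends to a function constant on the components of `N`,
  -- hence to a linear map that vanishes on `N` and agrees with `P.mkQ` on vectors supported in `S`.
  let g : κ → (κ → R) ⧸ P :=
    fun k => Function.extend (fun k : S => toN k) (fun k : S => toP k) 0 (toN k)
  have g_eq_toP : ∀ k ∈ S, g k = toP k := fun k hk => factors.extend_apply 0 ⟨k, hk⟩
  have le_ker : N ≤ LinearMap.ker (Fintype.linearCombination R g) := by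
    obtain ⟨E, hE⟩ := hN
    rw [hE, Submodule.span_le]
    rintro _ ⟨⟨k, l⟩, hkl, rfl⟩
    have toN_eq : toN k = toN l :=
      (Submodule.Quotient.eq N).2 (hE ▸ Submodule.subset_span ⟨(k, l), hkl, rfl⟩)
    simp [g, toN_eq]
  rw [← Submodule.ker_mkQ P, LinearMap.mem_ker]
  calc
    P.mkQ v = ∑ k, v k • toP k := by
      conv_lhs => rw [pi_eq_sum_univ' v, map_sum]
      simp only [map_smul, toP]
    _ = ∑ k, v k • g k := Finset.sum_congr rfl fun k _ => by
      by_cases hk : v k = 0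
      · simp only [hk, zero_smul]
      · rw [g_eq_toP k (hvS hk)]
    _ = 0 := le_ker hv

theorem IsDifferenceSpan.disjoint_setoidSpan_iff [Finite κ] {A N : Submodule R (κ → R)}
    (hN : IsDifferenceSpan N) {S : Set κ} (hA : ∀ v ∈ A, Function.support v ⊆ S) :
    Disjoint A (setoidSpan R (connectedSetoid N S)) ↔ Disjoint A N := by
  refine ⟨fun h => ?_, fun h => h.mono_right (setoidSpan_connectedSetoid_le N S)⟩
  rw [Submodule.disjoint_def] at h ⊢
  exact fun v hvA hvN => h v hvA (hN.mem_setoidSpan_of_support_subset hvN (hA v hvA))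

end DifferenceSpans

section Supports

variable {R K κ : Type*} [Semiring R] [DivisionRing K]

/-- The set of coordinates in which some vector of `W` is nonzero. -/
def totalSupport (W : Submodule R (κ → R)) : Set κ := ⋃ v ∈ W, Function.support v

theorem support_subset_totalSupport {W : Submodule R (κ → R)} {v : κ → R} (hv : v ∈ W) :
    Function.support v ⊆ totalSupport W :=
  Set.subset_biUnion_of_mem (u := fun v : κ → R => Function.support v) hv

theorem totalSupport_span (E : Set (κ → R)) :
    totalSupport (Submodule.span R E) = ⋃ v ∈ E, Function.support v := by
  refine Set.Subset.antisymm (Set.iUnion₂_subset fun v hv => ?_)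
    (Set.biUnion_mono Submodule.subset_span fun _ _ => subset_rfl)
  induction hv using Submodule.span_induction with
  | mem v hv => exact Set.subset_biUnion_of_mem (u := fun v : κ → R => Function.support v) hv
  | zero => simp
  | add v w _ _ hv hw => exact (Function.support_add v w).trans (Set.union_subset hv hw)
  | smul a v _ hv => exact (Function.support_const_smul_subset a v).trans hv

theorem ncard_totalSupport_span_le [Finite κ] {E : Set (κ → K)} {r : ℕ}
    (hE : ∀ v ∈ E, (Function.support v).ncard ≤ r) :
    (totalSupport (Submodule.span K E)).ncard ≤
      r * Module.finrank K (Submodule.span K E) := by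
  obtain ⟨B, hBE, hcard, hspan, -⟩ := Submodule.exists_finset_span_eq_linearIndepOn K E
  rw [← hcard, ← hspan, totalSupport_span, mul_comm]
  calc
    (⋃ v ∈ B, Function.support v).ncard ≤ ∑ v ∈ B, (Function.support v).ncard :=
      B.set_ncard_biUnion_le _
    _ ≤ B.card * r := Finset.sum_le_card_nsmul B _ r fun v hv => hE v (hBE hv)

theorem IsDifferenceSpan.ncard_totalSupport_le [Finite κ] [DecidableEq κ] {W : Submodule K (κ → K)}
    (hW : IsDifferenceSpan W) : (totalSupport W).ncard ≤ 2 * Module.finrank K W := by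
  obtain ⟨E, rfl⟩ := hW
  refine ncard_totalSupport_span_le ?_
  rintro _ ⟨⟨k, l⟩, -, rfl⟩
  have support_subset :
      Function.support (Pi.single k 1 - Pi.single l 1 : κ → K) ⊆ {k, l} :=
    (Function.support_sub _ _).trans
      (Set.union_subset_union Pi.support_single_subset Pi.support_single_subset)
  exact (Set.ncard_le_ncard support_subset).trans ((Set.ncard_insert_le k {l}).trans (by simp))

end Supports

theorem surjective_setoid_ker (α : Type*) :
    Function.Surjective (Setoid.ker : (α → α) → Setoid α) := fun s =>
  ⟨fun a => (Quotient.mk s a).out, by ext a b; simp [Setoid.ker_def, Quotient.eq]⟩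

theorem natCard_setoid_le (α : Type*) [Finite α] :
    Nat.card (Setoid α) ≤ Nat.card α ^ Nat.card α := by
  rw [← Nat.card_fun]
  exact Nat.card_le_card_of_surjective _ (surjective_setoid_ker α)

theorem sum_finrank_le_of_iSupIndep {K M ι : Type*} [DivisionRing K] [AddCommGroup M]
    [Module K M] [Module.Finite K M] [Fintype ι] {W : ι → Submodule K M}
    (hW : iSupIndep W) : ∑ i, Module.finrank K (W i) ≤ Module.finrank K M := by
  classical
  rw [← Module.finrank_directSum]
  exact LinearMap.finrank_le_finrank_of_injective hW.dfinsupp_lsum_injective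

section Assignments

variable {R κ ι Y : Type*} {α : ι → Type*} [Ring R]

/-- The part of the subspace `φ(x)` contributed by the variables in `s`. -/
def partialSpan (U : ∀ i, α i → Submodule R (κ → R)) (s : Set ι) (x : ∀ i, α i) :
    Submodule R (κ → R) :=
  ⨆ i ∈ s, U i (x i)

/-- The span of all the subspaces attached to the variables in `s`, for all their values. -/
def blockSpan (U : ∀ i, α i → Submodule R (κ → R)) (s : Set ι) : Submodule R (κ → R) :=
  ⨆ i ∈ s, ⨆ a, U i a

/-- The restrictions of `f` to the block `T`, as functions of the whole input that ignore the
variables outside `T`. -/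
def subfunctions [DecidableEq ι] (f : (∀ i, α i) → Y → Bool) (T : Finset ι) :
    Set ((∀ i, α i) → Bool) :=
  {g | ∃ ρ y, g = fun a => f (T.piecewise a ρ) y}

/-- A projective assignment that decomposes along the variables of the first argument: `x` is
mapped to `⨆ i, U i (x i)`, and `y` to the arbitrary difference span `V y`. Independence is
imposed on the joint spaces `⨆ a, U i a` of the variables. -/
structure IsLeftDecompAssignment [DecidableEq κ] (f : (∀ i, α i) → Y → Bool)
    (U : ∀ i, α i → Submodule R (κ → R)) (V : Y → Submodule R (κ → R)) : Prop where
  isDifferenceSpan_left : ∀ i a, IsDifferenceSpan (U i a)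
  isDifferenceSpan_right : ∀ y, IsDifferenceSpan (V y)
  apply_iff : ∀ x y, f x y = true ↔ ¬ Disjoint (⨆ i, U i (x i)) (V y)
  iSupIndep_left : iSupIndep fun i => ⨆ a, U i a

theorem partialSpan_le_blockSpan (U : ∀ i, α i → Submodule R (κ → R)) (s : Set ι)
    (x : ∀ i, α i) : partialSpan U s x ≤ blockSpan U s :=
  iSup₂_mono fun i _ => le_iSup (U i) (x i)

theorem iSup_piecewise_eq_partialSpan_sup [DecidableEq ι]
    (U : ∀ i, α i → Submodule R (κ → R)) (T : Finset ι) (a ρ : ∀ i, α i) :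
    ⨆ i, U i (T.piecewise a ρ i) = partialSpan U T a ⊔ partialSpan U (T : Set ι)ᶜ ρ := by
  rw [partialSpan, partialSpan, ← iSup_sup_eq]
  refine iSup_congr fun i => ?_
  by_cases hi : i ∈ T <;> simp [hi]

theorem disjoint_blockSpan {U : ∀ i, α i → Submodule R (κ → R)}
    (hU : iSupIndep fun i => ⨆ a, U i a) {s t : Set ι} (hst : Disjoint s t) :
    Disjoint (blockSpan U s) (blockSpan U t) :=
  hU.disjoint_biSup_biSup hst

theorem iSupIndep_blockSpan {μ : Type*} {U : ∀ i, α i → Submodule R (κ → R)}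
    (hU : iSupIndep fun i => ⨆ a, U i a) {s : μ → Set ι}
    (hs : Pairwise (Function.onFun Disjoint s)) :
    iSupIndep fun j => blockSpan U (s j) := by
  intro j
  have disjoint_others : Disjoint (s j) (⋃ k ≠ j, s k) :=
    Set.disjoint_iUnion₂_right.2 fun k hk => hs hk.symm
  refine (disjoint_blockSpan hU disjoint_others).mono_right (iSup₂_le fun k hk => ?_)
  exact biSup_mono fun i hi => Set.mem_biUnion hk hi

namespace IsLeftDecompAssignment

variable [DecidableEq κ] {f : (∀ i, α i) → Y → Bool} {U : ∀ i, α i → Submodule R (κ → R)}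
  {V : Y → Submodule R (κ → R)}

theorem isDifferenceSpan_partialSpan (h : IsLeftDecompAssignment f U V) (s : Set ι)
    (x : ∀ i, α i) : IsDifferenceSpan (partialSpan U s x) :=
  .iSup fun i => .iSup fun _ => h.isDifferenceSpan_left i (x i)

theorem isDifferenceSpan_blockSpan (h : IsLeftDecompAssignment f U V) (s : Set ι) :
    IsDifferenceSpan (blockSpan U s) :=
  .iSup fun i => .iSup fun _ => .iSup fun a => h.isDifferenceSpan_left i a

variable [DecidableEq ι]

theorem apply_piecewise_iff (h : IsLeftDecompAssignment f U V) (T : Finset ι) (a ρ : ∀ i, α i)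
    (y : Y) : f (T.piecewise a ρ) y = true ↔
      ¬ Disjoint (partialSpan U T a ⊔ partialSpan U (T : Set ι)ᶜ ρ) (V y) := by
  rw [h.apply_iff, iSup_piecewise_eq_partialSpan_sup]

theorem apply_piecewise_iff_of_disjoint (h : IsLeftDecompAssignment f U V) (T : Finset ι)
    (a ρ : ∀ i, α i) (y : Y) (hρy : Disjoint (partialSpan U (T : Set ι)ᶜ ρ) (V y)) :
    f (T.piecewise a ρ) y = true ↔
      ¬ Disjoint (partialSpan U T a) (partialSpan U (T : Set ι)ᶜ ρ ⊔ V y) := by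
  have disjoint_fixed : Disjoint (partialSpan U T a) (partialSpan U (T : Set ι)ᶜ ρ) :=
    (disjoint_blockSpan h.iSupIndep_left disjoint_compl_right).mono
      (partialSpan_le_blockSpan U _ a) (partialSpan_le_blockSpan U _ ρ)
  rw [h.apply_piecewise_iff]
  exact not_congr ⟨disjoint_fixed.disjoint_sup_right_of_disjoint_sup_left,
    hρy.disjoint_sup_left_of_disjoint_sup_right⟩

variable [Finite κ]

open Classical in
theorem subfunctions_subset (h : IsLeftDecompAssignment f U V) (T : Finset ι) :
    subfunctions f T ⊆ insert (fun _ => true)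
      (Set.range fun (s : Setoid (totalSupport (blockSpan U T))) a =>
        !decide (Disjoint (partialSpan U T a) (setoidSpan R s))) := by
  rintro _ ⟨ρ, y, rfl⟩
  by_cases hρy : Disjoint (partialSpan U (T : Set ι)ᶜ ρ) (V y)
  · refine Or.inr ⟨connectedSetoid (partialSpan U (T : Set ι)ᶜ ρ ⊔ V y) _, funext fun a => ?_⟩
    have support_subset (v) (hv : v ∈ partialSpan U T a) :
        Function.support v ⊆ totalSupport (blockSpan U T) :=
      support_subset_totalSupport (partialSpan_le_blockSpan U T a hv)
    rw [Bool.eq_iff_iff, h.apply_piecewise_iff_of_disjoint T a ρ y hρy,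
      ← ((h.isDifferenceSpan_partialSpan _ ρ).sup
        (h.isDifferenceSpan_right y)).disjoint_setoidSpan_iff support_subset]
    simp only [Bool.not_eq_true', decide_eq_false_iff_not]
  · refine Or.inl (funext fun a => (h.apply_piecewise_iff T a ρ y).2 ?_)
    exact fun hd => hρy (hd.mono_left le_sup_right)

theorem ncard_subfunctions_le (h : IsLeftDecompAssignment f U V) (T : Finset ι) :
    (subfunctions f T).ncard ≤ (totalSupport (blockSpan U T)).ncard ^
      (totalSupport (blockSpan U T)).ncard + 1 := by
  classical
  have : Finite (Setoid (totalSupport (blockSpan U T))) :=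
    .of_surjective _ (surjective_setoid_ker _)
  refine (Set.ncard_le_ncard (h.subfunctions_subset T) ((Set.finite_range _).insert _)).trans ?_
  refine (Set.ncard_insert_le _ _).trans (Nat.succ_le_succ ?_)
  exact (Finite.card_range_le _).trans (natCard_setoid_le _)

end IsLeftDecompAssignment

end Assignments

theorem div_logb_le_of_le_mul_logb {L s : ℝ} (hL : 2 ≤ L) (hs : 0 ≤ s)
    (h : L ≤ 2 * s * Real.logb 2 s) : L / Real.logb 2 L ≤ 2 * s := by
  have one_le_logb : 1 ≤ Real.logb 2 L := by
    rwa [Real.le_logb_iff_rpow_le one_lt_two (by linarith), Real.rpow_one]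
  rcases le_total L (2 * s) with hLs | hsL
  · exact (div_le_self (by linarith) one_le_logb).trans hLs
  · rw [div_le_iff₀ (by linarith)]
    have s_pos : 0 < s := hs.lt_of_ne (by rintro rfl; norm_num at h; linarith)
    exact h.trans (by gcongr <;> linarith)

theorem logb_div_logb_logb_le {c s : ℕ} (hc : 16 ≤ c) (h : c ≤ s ^ s + 1) :
    Real.logb 2 c / Real.logb 2 (Real.logb 2 c) ≤ 2 * s := by
  have two_le_s : 2 ≤ s := by
    by_contra! hs
    interval_cases s <;> norm_num at h <;> omega
  have c_le_pow : c ≤ s ^ (2 * s) := by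
    calc
      c ≤ s ^ s + 1 := h
      _ ≤ s ^ s * s ^ s := by
        have : 2 ≤ s ^ s := two_le_s.trans (Nat.le_self_pow (by omega) s)
        nlinarith
      _ = s ^ (2 * s) := by rw [two_mul, pow_add]
  refine div_logb_le_of_le_mul_logb ?_ s.cast_nonneg ?_
  · rw [Real.le_logb_iff_rpow_le one_lt_two (by positivity)]
    norm_num
    exact_mod_cast (by omega : 4 ≤ c)
  · calc
      Real.logb 2 c ≤ Real.logb 2 ((s : ℝ) ^ (2 * s)) :=
        Real.logb_le_logb_of_le one_lt_two (by positivity) (mod_cast c_le_pow)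
      _ = 2 * s * Real.logb 2 s := by rw [Real.logb_pow]; push_cast; rfl

theorem stmt_17_general {K κ ι Y μ : Type*} {α : ι → Type*} [DivisionRing K] [Fintype κ]
    [DecidableEq κ] [DecidableEq ι] [Fintype μ] {f : (∀ i, α i) → Y → Bool}
    {U : ∀ i, α i → Submodule K (κ → K)} {V : Y → Submodule K (κ → K)}
    (h : IsLeftDecompAssignment f U V) {T : μ → Finset ι}
    (hT : Pairwise (Function.onFun Disjoint T))
    (hc : ∀ j, 16 ≤ (subfunctions f (T j)).ncard) :
    ∑ j, Real.logb 2 (subfunctions f (T j)).ncard /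
      Real.logb 2 (Real.logb 2 (subfunctions f (T j)).ncard) ≤ 4 * Fintype.card κ := by
  have block_le (j : μ) : Real.logb 2 (subfunctions f (T j)).ncard /
      Real.logb 2 (Real.logb 2 (subfunctions f (T j)).ncard) ≤
        4 * Module.finrank K (blockSpan U (T j)) := by
    have support_le : ((totalSupport (blockSpan U (T j))).ncard : ℝ) ≤
        2 * Module.finrank K (blockSpan U (T j)) :=
      mod_cast (h.isDifferenceSpan_blockSpan (T j)).ncard_totalSupport_le
    linarith [logb_div_logb_logb_le (hc j) (h.ncard_subfunctions_le (T j))]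
  have indep : iSupIndep fun j => blockSpan U (T j : Set ι) :=
    iSupIndep_blockSpan h.iSupIndep_left fun i j hij => Finset.disjoint_coe.2 (hT hij)
  calc
    _ ≤ ∑ j, 4 * (Module.finrank K (blockSpan U (T j)) : ℝ) :=
      Finset.sum_le_sum fun j _ => block_le j
    _ = 4 * ((∑ j, Module.finrank K (blockSpan U (T j)) : ℕ) : ℝ) := by
      rw [← Finset.mul_sum, Nat.cast_sum]
    _ ≤ 4 * Fintype.card κ := by
      gcongr
      rw [← Module.finrank_fintype_fun_eq_card K]
      exact sum_finrank_le_of_iSupIndep indep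

theorem IsDiffSpanned.isDifferenceSpan {D : ℕ} {W : Submodule (ZMod 2) (Fin D → ZMod 2)}
    (hW : IsDiffSpanned W) : IsDifferenceSpan W := by
  obtain ⟨S, hS, rfl⟩ := hW
  refine ⟨{e | Pi.single e.1 1 - Pi.single e.2 1 ∈ S}, congrArg _ ?_⟩
  refine Set.Subset.antisymm (fun w hw => ?_) (Set.image_subset_iff.2 fun _ he => he)
  obtain ⟨k, l, -, rfl⟩ := hS w hw
  exact ⟨(k, l), hw, rfl⟩

theorem IsBitDecompAssignment.isLeftDecompAssignment {n D : ℕ}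
    {f : (Fin n → Bool) → (Fin n → Bool) → Bool}
    {U V : Fin n → Bool → Submodule (ZMod 2) (Fin D → ZMod 2)}
    (h : IsBitDecompAssignment f D U V) :
    IsLeftDecompAssignment f U fun y => ⨆ j, V j (y j) := by
  obtain ⟨hU, hV, hf, hindep, -⟩ := h
  refine ⟨fun i a => (hU i a).isDifferenceSpan,
    fun y => .iSup fun j => (hV j (y j)).isDifferenceSpan,
    fun x y => by rw [hf, Ne, disjoint_iff], fun i => ?_⟩
  have disjoint_fibers : Disjoint {p : Fin n × Bool | p.1 = i} {p | p.1 ≠ i} :=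
    disjoint_compl_right
  refine (disjoint_iff.2 (hindep _ _ disjoint_fibers)).mono (iSup_le fun a => ?_)
    (iSup₂_le fun j hj => iSup_le fun a => ?_)
  · exact le_biSup (fun p : Fin n × Bool => U p.1 p.2) (i := (i, a)) rfl
  · exact le_biSup (fun p : Fin n × Bool => U p.1 p.2) (i := (j, a)) hj

/-- Nechiporuk-style lower bound for bitwise decomposable projective dimension:
there is an absolute constant `γ > 0` such that for any `f` and pairwise disjoint
blocks `T₁, …, T_m` of `x`-variables with `cᵢ(f)` distinct restricted subfunctions
on `Tᵢ` (all `cᵢ(f) ≥ 16`), every bitwise decomposable projective assignment for `f`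
of dimension `D` satisfies `D ≥ γ · Σᵢ log cᵢ(f) / log log cᵢ(f)` (logs base 2). -/
theorem stmt_17 : ∃ γ : ℝ, 0 < γ ∧
    ∀ (n m : ℕ), 1 ≤ n → 1 ≤ m →
    ∀ (f : (Fin n → Bool) → (Fin n → Bool) → Bool) (T : Fin m → Finset (Fin n)),
      (∀ i j : Fin m, i ≠ j → Disjoint (T i) (T j)) →
    ∀ c : Fin m → ℕ,
      (∀ i, c i = Set.ncard {g : (Fin n → Bool) → Bool |
          ∃ ρ w : Fin n → Bool,
            g = fun a => f (fun j => if j ∈ T i then a j else ρ j) w}) →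
      (∀ i, 16 ≤ c i) →
    ∀ (D : ℕ) (U V : Fin n → Bool → Submodule (ZMod 2) (Fin D → ZMod 2)),
      IsBitDecompAssignment f D U V →
      γ * ∑ i : Fin m, Real.logb 2 (c i) / Real.logb 2 (Real.logb 2 (c i)) ≤ D := by
  refine ⟨1 / 4, by norm_num, fun n m _ _ f T hT c hc hc16 D U V h => ?_⟩
  obtain rfl : c = fun i => (subfunctions f (T i)).ncard := funext hc
  have sum_le := stmt_17_general h.isLeftDecompAssignment hT hc16
  rw [Fintype.card_fin] at sum_le
  linarith
end

section
/- Let F be a finite field with q ≥ 2 elements and let 0 ≤ k ≤ n. Then the number N_k of k-dimensional F-linear subspaces of F^n satisfies q^{k(n−k)} ≤ N_k < c_q · q^{k(n−k)}, where c_q = ∏_{j=1}^{∞} (1 − q^{−j})^{−1} (an absolutely convergent infinite product, which for all q ≥ 2 satisfies c_q ≤ c_2 < 3.463). -/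
/-- The constant `c_q = ∏_{j=1}^∞ (1 − q^{−j})⁻¹`. -/
noncomputable def cq (q : ℕ) : ℝ :=
  ∏' j : ℕ, (1 - ((q : ℝ))⁻¹ ^ (j + 1))⁻¹

/-!
Counting the linearly independent `k`-tuples of an `n`-dimensional space by their spans gives
`N_k ∏_{i<k} (q^k - q^i) = ∏_{i<k} (q^n - q^i)`. The lower bound compares the two products factor by
factor, using `q^{n-k} (q^k - q^i) ≤ q^n - q^i`. For the upper bound, the right-hand side is at most
`q^{kn}`, while the left-hand product is `q^{k²} ∏_{j=1}^k (1 - q^{-j})`, and these partial products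
decrease strictly to Euler's function at `q⁻¹`, which is `c_q⁻¹`. Numerically, the tail of Euler's
product is controlled by the Weierstrass inequality `∏_{j>m} (1 - x^j) ≥ 1 - ∑_{j>m} x^j`.
-/

open Filter Finset Module
open scoped Topology

section EulerFunction

/-- Euler's function `φ(x) = ∏_{j=1}^∞ (1 - x^j)` on the reals. It is meaningful for `|x| < 1`,
where the product converges, and `c_q = φ(q⁻¹)⁻¹`. -/
noncomputable def eulerFunction (x : ℝ) : ℝ :=
  ∏' j : ℕ, (1 - x ^ (j + 1))

variable {x : ℝ}

lemma summable_abs_pow_succ (hx : |x| < 1) : Summable fun j : ℕ => |x ^ (j + 1)| := by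
  simpa only [abs_pow] using
    (summable_nat_add_iff 1).2 (summable_geometric_of_lt_one (abs_nonneg x) hx)

lemma multipliable_one_sub_pow_succ (hx : |x| < 1) :
    Multipliable fun j : ℕ => 1 - x ^ (j + 1) := by
  simpa only [sub_eq_add_neg] using
    Real.multipliable_one_add_of_summable (summable_abs_pow_succ hx).of_abs.neg

lemma tendsto_prod_range_eulerFunction (hx : |x| < 1) :
    Tendsto (fun m => ∏ j ∈ range m, (1 - x ^ (j + 1))) atTop (𝓝 (eulerFunction x)) :=
  (multipliable_one_sub_pow_succ hx).hasProd.tendsto_prod_nat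

lemma eulerFunction_ne_zero (hx : |x| < 1) : eulerFunction x ≠ 0 := by
  have factor_ne_zero (j : ℕ) : 1 + -x ^ (j + 1) ≠ 0 := by
    have : |x ^ (j + 1)| < 1 := by
      simpa only [abs_pow] using pow_lt_one₀ (abs_nonneg x) hx j.succ_ne_zero
    linarith [(abs_lt.1 this).2]
  simpa only [eulerFunction, sub_eq_add_neg] using
    tprod_one_add_ne_zero_of_summable factor_ne_zero
      (by simpa only [norm_neg, Real.norm_eq_abs] using summable_abs_pow_succ hx)

lemma one_sub_pow_succ_pos (hx₀ : 0 ≤ x) (hx₁ : x < 1) (j : ℕ) : 0 < 1 - x ^ (j + 1) :=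
  sub_pos.2 (pow_lt_one₀ hx₀ hx₁ j.succ_ne_zero)

lemma prod_range_one_sub_pow_succ_pos (hx₀ : 0 ≤ x) (hx₁ : x < 1) (m : ℕ) :
    0 < ∏ j ∈ range m, (1 - x ^ (j + 1)) :=
  prod_pos fun j _ => one_sub_pow_succ_pos hx₀ hx₁ j

lemma eulerFunction_pos (hx₀ : 0 ≤ x) (hx₁ : x < 1) : 0 < eulerFunction x := by
  have hx : |x| < 1 := by rwa [abs_of_nonneg hx₀]
  exact (eulerFunction_ne_zero hx).symm.lt_of_le <|
    ge_of_tendsto' (tendsto_prod_range_eulerFunction hx) fun m =>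
      (prod_range_one_sub_pow_succ_pos hx₀ hx₁ m).le

lemma eulerFunction_lt_prod_range (hx₀ : 0 < x) (hx₁ : x < 1) (m : ℕ) :
    eulerFunction x < ∏ j ∈ range m, (1 - x ^ (j + 1)) := by
  have anti : StrictAnti fun m => ∏ j ∈ range m, (1 - x ^ (j + 1)) :=
    strictAnti_nat_of_succ_lt fun m => by
      rw [prod_range_succ]
      exact mul_lt_of_lt_one_right (prod_range_one_sub_pow_succ_pos hx₀.le hx₁ m)
        (sub_lt_self 1 (pow_pos hx₀ _))
  exact (anti.antitone.le_of_tendsto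
    (tendsto_prod_range_eulerFunction (by rwa [abs_of_pos hx₀])) (m + 1)).trans_lt
      (anti m.lt_succ_self)

lemma eulerFunction_antitoneOn : AntitoneOn eulerFunction (Set.Ico 0 1) := by
  rintro x ⟨hx₀, hx₁⟩ y ⟨hy₀, hy₁⟩ hxy
  refine le_of_tendsto_of_tendsto'
    (tendsto_prod_range_eulerFunction (by rwa [abs_of_nonneg hy₀]))
    (tendsto_prod_range_eulerFunction (by rwa [abs_of_nonneg hx₀])) fun m => ?_
  refine prod_le_prod (fun j _ => (one_sub_pow_succ_pos hy₀ hy₁ j).le) fun j _ => ?_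
  gcongr

lemma prod_range_mul_one_sub_le_eulerFunction (hx₀ : 0 ≤ x) (hx₁ : x < 1) (m : ℕ) :
    (∏ j ∈ range m, (1 - x ^ (j + 1))) * (1 - x ^ (m + 1) / (1 - x)) ≤ eulerFunction x := by
  set u : ℕ → ℝ := fun m => (∏ j ∈ range m, (1 - x ^ (j + 1))) * (1 - x ^ (m + 1) / (1 - x))
  have hx : 0 < 1 - x := sub_pos.2 hx₁
  have mono : Monotone u := monotone_nat_of_le_succ fun m => by
    have geom_tail : x ^ (m + 1) / (1 - x) = x ^ (m + 1) + x ^ (m + 2) / (1 - x) := by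
      field_simp
      ring
    have weierstrass : 1 - x ^ (m + 1) / (1 - x) ≤
        (1 - x ^ (m + 1)) * (1 - x ^ (m + 2) / (1 - x)) := by
      rw [geom_tail]
      have : 0 ≤ x ^ (m + 1) * (x ^ (m + 2) / (1 - x)) := by positivity
      linarith
    simp only [u, prod_range_succ _ m, mul_assoc]
    exact mul_le_mul_of_nonneg_left weierstrass (prod_range_one_sub_pow_succ_pos hx₀ hx₁ m).le
  have tail : Tendsto (fun m : ℕ => 1 - x ^ (m + 1) / (1 - x)) atTop (𝓝 1) := by
    simpa using (((tendsto_pow_atTop_nhds_zero_of_lt_one hx₀ hx₁).comp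
      (tendsto_add_atTop_nat 1)).div_const (1 - x)).const_sub 1
  have lim : Tendsto u atTop (𝓝 (eulerFunction x)) := by
    simpa only [mul_one] using
      (tendsto_prod_range_eulerFunction (by rwa [abs_of_nonneg hx₀])).mul tail
  exact mono.ge_of_tendsto lim m

end EulerFunction

section Constant

variable {q : ℕ}

lemma cast_inv_mem_Ioo (hq : 1 < q) : (q : ℝ)⁻¹ ∈ Set.Ioo 0 1 :=
  ⟨by positivity, inv_lt_one_of_one_lt₀ (by exact_mod_cast hq)⟩

lemma cq_eq_inv_eulerFunction (hq : 1 < q) : cq q = (eulerFunction (q : ℝ)⁻¹)⁻¹ := by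
  obtain ⟨hq₀, hq₁⟩ := cast_inv_mem_Ioo hq
  have hx : |(q : ℝ)⁻¹| < 1 := by rwa [abs_of_pos hq₀]
  exact (multipliable_one_sub_pow_succ hx).tprod_inv₀ (eulerFunction_ne_zero hx)

lemma cq_antitoneOn : AntitoneOn cq (Set.Ioi 1) := by
  intro p hp q hq hpq
  obtain ⟨hp₀, hp₁⟩ := cast_inv_mem_Ioo hp
  obtain ⟨hq₀, hq₁⟩ := cast_inv_mem_Ioo hq
  rw [cq_eq_inv_eulerFunction hp, cq_eq_inv_eulerFunction hq]
  refine inv_anti₀ (eulerFunction_pos hp₀.le hp₁)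
    (eulerFunction_antitoneOn ⟨hq₀.le, hq₁⟩ ⟨hp₀.le, hp₁⟩ ?_)
  have : 0 < p := zero_lt_one.trans hp
  gcongr

lemma cq_two_lt : cq 2 < 3.463 := by
  -- The lower bound with `m` factors has relative error of order `4⁻ᵐ`, and `m = 8` suffices here.
  have lower : 1 / 3.463 < eulerFunction 2⁻¹ := by
    refine lt_of_lt_of_le ?_
      (prod_range_mul_one_sub_le_eulerFunction (by norm_num) (by norm_num) 8)
    norm_num [prod_range_succ]
  rw [cq_eq_inv_eulerFunction one_lt_two, Nat.cast_ofNat]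
  exact inv_lt_of_inv_lt₀ (by norm_num) (by simpa only [one_div] using lower)

end Constant

section Products

lemma prod_range_pow_sub_pow {K : Type*} [Field K] {a : K} (ha : a ≠ 0) (k : ℕ) :
    ∏ i ∈ range k, (a ^ k - a ^ i) = a ^ (k * k) * ∏ j ∈ range k, (1 - a⁻¹ ^ (j + 1)) := by
  have factor (j : ℕ) (hj : j ∈ range k) :
      a ^ k - a ^ (k - 1 - j) = a ^ k * (1 - a⁻¹ ^ (j + 1)) := by
    have : a ^ k = a ^ (k - 1 - j) * a ^ (j + 1) := by
      rw [← pow_add]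
      congr 1
      have := mem_range.1 hj
      omega
    rw [this, inv_pow]
    field_simp
  rw [← prod_range_reflect, prod_congr rfl factor, prod_mul_distrib, prod_const, card_range,
    pow_mul]

variable {q : ℕ}

lemma pow_mul_prod_range_pow_sub_pow_le (hq : 0 < q) {k n : ℕ} (hk : k ≤ n) :
    q ^ (k * (n - k)) * ∏ i ∈ range k, (q ^ k - q ^ i) ≤ ∏ i ∈ range k, (q ^ n - q ^ i) := by
  have factor_le (i : ℕ) : q ^ (n - k) * (q ^ k - q ^ i) ≤ q ^ n - q ^ i := by
    rw [Nat.mul_sub, ← pow_add, Nat.sub_add_cancel hk]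
    exact Nat.sub_le_sub_left (Nat.le_mul_of_pos_left _ (pow_pos hq _)) _
  calc q ^ (k * (n - k)) * ∏ i ∈ range k, (q ^ k - q ^ i)
      = ∏ i ∈ range k, q ^ (n - k) * (q ^ k - q ^ i) := by
        rw [prod_mul_distrib, prod_const, card_range, ← pow_mul, mul_comm k]
    _ ≤ ∏ i ∈ range k, (q ^ n - q ^ i) := prod_le_prod' fun i _ => factor_le i

lemma pow_mul_eulerFunction_lt_prod_range (hq : 1 < q) (k : ℕ) :
    (q : ℝ) ^ (k * k) * eulerFunction (q : ℝ)⁻¹ < (∏ i ∈ range k, (q ^ k - q ^ i) : ℕ) := by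
  obtain ⟨hq₀, hq₁⟩ := cast_inv_mem_Ioo hq
  have cast_prod : ((∏ i ∈ range k, (q ^ k - q ^ i) : ℕ) : ℝ) =
      ∏ i ∈ range k, ((q : ℝ) ^ k - (q : ℝ) ^ i) := by
    rw [Nat.cast_prod]
    refine prod_congr rfl fun i hi => ?_
    rw [Nat.cast_sub (Nat.pow_le_pow_right hq.le (mem_range.1 hi).le), Nat.cast_pow, Nat.cast_pow]
  rw [cast_prod, prod_range_pow_sub_pow (by positivity)]
  exact mul_lt_mul_of_pos_left (eulerFunction_lt_prod_range hq₀ hq₁ k) (by positivity)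

end Products

section Subspaces

variable {K V : Type*} [DivisionRing K] [AddCommGroup V] [Module K V]

lemma span_range_coe_eq_of_linearIndependent {ι : Type*} [Fintype ι] {S : Submodule K V}
    [FiniteDimensional K S] {t : ι → S} (ht : LinearIndependent K t)
    (hS : finrank K S = Fintype.card ι) :
    Submodule.span K (Set.range fun i => (t i : V)) = S := by
  rw [Set.range_comp' Subtype.val t, ← Submodule.coe_subtype, Submodule.span_image,
    ht.span_eq_top_of_card_eq_finrank' hS.symm, Submodule.map_subtype_top]

variable (K V) in
/-- Linearly independent families indexed by `ι`, sorted according to the subspace they span: each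
is a family inside a subspace of dimension `#ι`, which is then its span. -/
noncomputable def linearIndependentEquivSigma (ι : Type*) [Fintype ι] [FiniteDimensional K V] :
    (S : {S : Submodule K V // finrank K S = Fintype.card ι}) ×
        {t : ι → S.1 // LinearIndependent K t} ≃
      {s : ι → V // LinearIndependent K s} :=
  Equiv.ofBijective
    (fun p => ⟨fun i => p.2.1 i, p.2.2.map' p.1.1.subtype p.1.1.ker_subtype⟩) <| by
    constructor
    · rintro ⟨⟨S, hS⟩, t, ht⟩ ⟨⟨S', hS'⟩, t', ht'⟩ h
      have coe_eq : (fun i => (t i : V)) = fun i => (t' i : V) := congrArg Subtype.val h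
      obtain rfl : S = S' := by
        have span_t := span_range_coe_eq_of_linearIndependent ht hS
        rw [coe_eq] at span_t
        exact span_t.symm.trans (span_range_coe_eq_of_linearIndependent ht' hS')
      obtain rfl : t = t' := funext fun i => Subtype.ext (congrFun coe_eq i)
      rfl
    · rintro ⟨s, hs⟩
      have hspan (i : ι) : s i ∈ Submodule.span K (Set.range s) :=
        Submodule.subset_span (Set.mem_range_self i)
      exact ⟨⟨⟨Submodule.span K (Set.range s), finrank_span_eq_card hs⟩,
        fun i => ⟨s i, hspan i⟩, .of_comp (Submodule.subtype _) hs⟩, rfl⟩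

variable [Fintype K] [Finite V] {k : ℕ}

lemma card_submodule_finrank_mul_prod_range (hk : k ≤ finrank K V) :
    Nat.card {S : Submodule K V // finrank K S = k} *
        ∏ i ∈ range k, (Fintype.card K ^ k - Fintype.card K ^ i) =
      ∏ i ∈ range k, (Fintype.card K ^ finrank K V - Fintype.card K ^ i) := by
  have : Fintype {S : Submodule K V // finrank K S = k} := Fintype.ofFinite _
  have card_fiber (S : {S : Submodule K V // finrank K S = k}) :
      Nat.card {t : Fin k → S.1 // LinearIndependent K t} =
        ∏ i ∈ range k, (Fintype.card K ^ k - Fintype.card K ^ i) := by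
    rw [card_linearIndependent S.2.ge, S.2, prod_range]
  have card_sigma := Nat.card_congr (linearIndependentEquivSigma K V (Fin k))
  rw [card_linearIndependent hk, Fintype.card_fin, Nat.card_sigma] at card_sigma
  rw [prod_range fun i => Fintype.card K ^ finrank K V - Fintype.card K ^ i, ← card_sigma,
    sum_congr rfl fun S _ => card_fiber S, sum_const, card_univ, smul_eq_mul,
    Nat.card_eq_fintype_card]

lemma pow_le_card_submodule_finrank (hk : k ≤ finrank K V) :
    Fintype.card K ^ (k * (finrank K V - k)) ≤
      Nat.card {S : Submodule K V // finrank K S = k} := by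
  have denominator_pos : 0 < ∏ i ∈ range k, (Fintype.card K ^ k - Fintype.card K ^ i) :=
    prod_pos fun i hi =>
      Nat.sub_pos_of_lt (Nat.pow_lt_pow_right Fintype.one_lt_card (mem_range.1 hi))
  refine Nat.le_of_mul_le_mul_right ?_ denominator_pos
  rw [card_submodule_finrank_mul_prod_range hk]
  exact pow_mul_prod_range_pow_sub_pow_le Fintype.card_pos hk

lemma card_submodule_finrank_lt_cq_mul_pow (hk : k ≤ finrank K V) :
    (Nat.card {S : Submodule K V // finrank K S = k} : ℝ) <
      cq (Fintype.card K) * (Fintype.card K : ℝ) ^ (k * (finrank K V - k)) := by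
  have card_mul_prod := card_submodule_finrank_mul_prod_range hk
  have N_pos := (pow_pos Fintype.card_pos _).trans_le (pow_le_card_submodule_finrank hk)
  have hq : 1 < Fintype.card K := Fintype.one_lt_card
  set q := Fintype.card K
  set n := finrank K V
  set N := Nat.card {S : Submodule K V // finrank K S = k}
  obtain ⟨hq₀, hq₁⟩ := cast_inv_mem_Ioo hq
  have prod_le : ∏ i ∈ range k, (q ^ n - q ^ i) ≤ q ^ (k * (n - k)) * q ^ (k * k) :=
    calc ∏ i ∈ range k, (q ^ n - q ^ i)
        ≤ (q ^ n) ^ k := by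
          simpa only [card_range] using
            prod_le_pow_card (range k) _ _ fun i _ => Nat.sub_le (q ^ n) (q ^ i)
      _ = q ^ (k * (n - k)) * q ^ (k * k) := by
        rw [← pow_add, ← mul_add, Nat.sub_add_cancel hk, ← pow_mul, mul_comm]
  have scaled_lt : (N * eulerFunction (q : ℝ)⁻¹) * (q : ℝ) ^ (k * k) <
      (q : ℝ) ^ (k * (n - k)) * (q : ℝ) ^ (k * k) :=
    calc (N * eulerFunction (q : ℝ)⁻¹) * (q : ℝ) ^ (k * k)
        = N * ((q : ℝ) ^ (k * k) * eulerFunction (q : ℝ)⁻¹) := by ring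
      _ < N * (∏ i ∈ range k, (q ^ k - q ^ i) : ℕ) :=
        mul_lt_mul_of_pos_left (pow_mul_eulerFunction_lt_prod_range hq k) (by exact_mod_cast N_pos)
      _ ≤ (q : ℝ) ^ (k * (n - k)) * (q : ℝ) ^ (k * k) := by
        exact_mod_cast card_mul_prod.trans_le prod_le
  rw [cq_eq_inv_eulerFunction hq, ← div_eq_inv_mul, lt_div_iff₀ (eulerFunction_pos hq₀.le hq₁)]
  exact lt_of_mul_lt_mul_right scaled_lt (by positivity)

theorem stmt_19_general (hk : k ≤ finrank K V) :
    Fintype.card K ^ (k * (finrank K V - k)) ≤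
        Nat.card {S : Submodule K V // finrank K S = k} ∧
      (Nat.card {S : Submodule K V // finrank K S = k} : ℝ) <
        cq (Fintype.card K) * (Fintype.card K : ℝ) ^ (k * (finrank K V - k)) ∧
      cq (Fintype.card K) ≤ cq 2 ∧ cq 2 < 3.463 :=
  ⟨pow_le_card_submodule_finrank hk, card_submodule_finrank_lt_cq_mul_pow hk,
    cq_antitoneOn (Set.mem_Ioi.2 one_lt_two) Fintype.one_lt_card Fintype.one_lt_card, cq_two_lt⟩

end Subspaces

/-- Bounds on the Gaussian binomial coefficient: for a finite field `F` with `q`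
elements and `0 ≤ k ≤ n`, the number `N_k` of `k`-dimensional subspaces of `F^n`
satisfies `q^{k(n−k)} ≤ N_k < c_q · q^{k(n−k)}`, where `c_q ≤ c_2 < 3.463`. -/
theorem stmt_19 (F : Type) [Field F] [Fintype F] (q : ℕ) (hq : q = Fintype.card F)
    (n k : ℕ) (hk : k ≤ n)
    (N : ℕ)
    (hN : N = Nat.card {S : Submodule F (Fin n → F) // Module.finrank F ↥S = k}) :
    q ^ (k * (n - k)) ≤ N ∧
      (N : ℝ) < cq q * (q : ℝ) ^ (k * (n - k)) ∧
      cq q ≤ cq 2 ∧ cq 2 < 3.463 := by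
  subst hq hN
  simpa only [Module.finrank_fin_fun] using
    stmt_19_general (K := F) (V := Fin n → F) (hk.trans_eq (Module.finrank_fin_fun F).symm)
end
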